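/- arXiv:1110.0807 — 3 statements merged into one kernel-verified Lean document; each statement's English description precedes it below -/
import Mathlib

section
/- Let f_n : S_n → ℝ be a sequence of class functions whose distributions under P_n converge weakly to some limit law μ. Then for every α ∈ ℝ and every β ∈ ℝ which is a continuity point of the distribution function of μ, lim_{n→∞} ( P_n[ρ̃_∞(σ) ≤ α, f_n(σ) < β] − P_n[ρ̃_∞(σ) ≤ α]·P_n[f_n(σ) < β] ) = 0, where ρ̃_∞ = (n − ρ_∞)/√n; i.e., Spearman's uniform metric is asymptotically independent of any weakly convergent sequence of class functions. -/
open scoped BigOperators Classical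
open Finset Filter

/-- Probability of an event under the uniform measure on `S_n`. -/
noncomputable def Pn {n : ℕ} (p : Equiv.Perm (Fin n) → Prop) : ℝ :=
  ((Finset.univ.filter p).card : ℝ) / (Fintype.card (Equiv.Perm (Fin n)) : ℝ)

/-- Expectation under the uniform measure on `S_n`. -/
noncomputable def En {n : ℕ} (g : Equiv.Perm (Fin n) → ℝ) : ℝ :=
  (∑ σ : Equiv.Perm (Fin n), g σ) / (Fintype.card (Equiv.Perm (Fin n)) : ℝ)

/-- Spearman's uniform metric `ρ_∞(σ) = max_i |σ(i) − i|` (as a natural number). -/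
def rhoInf {n : ℕ} (σ : Equiv.Perm (Fin n)) : ℕ :=
  Finset.univ.sup fun i : Fin n => (((σ i : ℕ) : ℤ) - ((i : ℕ) : ℤ)).natAbs

/-- Normalized Spearman's uniform metric `ρ̃_∞ = (n − ρ_∞)/√n`. -/
noncomputable def rhoInfTilde {n : ℕ} (σ : Equiv.Perm (Fin n)) : ℝ :=
  ((n : ℝ) - (rhoInf σ : ℝ)) / Real.sqrt n


section AsympIndep

variable {V : Type*} [Fintype V] [DecidableEq V]

lemma ai_swap_count (S : Finset (Equiv.Perm V)) (T : Finset V) (y r : V)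
    (h : ∀ r' ∈ T, ∀ c ∈ S, Equiv.swap r r' * c ∈ S) :
    #T * #{c ∈ S | c y = r} ≤ #S := by
  have h1 : ∀ r' ∈ T, #{c ∈ S | c y = r} ≤ #{c ∈ S | c y = r'} := by
    intro r' hr'
    apply Finset.card_le_card_of_injOn (fun c => Equiv.swap r r' * c)
    · intro c hc
      simp only [coe_filter, Set.mem_ofPred_eq] at hc ⊢
      refine ⟨h r' hr' c hc.1, ?_⟩
      simp [hc.2]
    · intro a _ b _ hab
      exact mul_left_cancel hab
  calc #T * #{c ∈ S | c y = r} = ∑ r' ∈ T, #{c ∈ S | c y = r} := by simp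
    _ ≤ ∑ r' ∈ T, #{c ∈ S | c y = r'} := Finset.sum_le_sum h1
    _ = #(T.biUnion fun r' => {c ∈ S | c y = r'}) := by
        rw [Finset.card_biUnion]
        intro a _ b _ hab
        rw [Function.onFun, Finset.disjoint_left]
        intro c hc hc'
        simp only [mem_filter] at hc hc'
        exact hab (hc.2.symm.trans hc'.2)
    _ ≤ #S := by
        apply Finset.card_le_card
        intro c hc
        simp only [mem_biUnion, mem_filter] at hc
        obtain ⟨_, _, hc, _⟩ := hc
        exact hc

lemma ai_one (x y : V) :
    Fintype.card V * #{σ : Equiv.Perm V | σ x = y} ≤ Fintype.card (Equiv.Perm V) :=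
  ai_swap_count (univ : Finset (Equiv.Perm V)) univ x y (by simp)

lemma ai_two (x y : V) :
    (Fintype.card V - 1) * #{σ : Equiv.Perm V | σ (σ x) = y}
      ≤ 2 * Fintype.card (Equiv.Perm V) := by
  have hz : ∀ z ∈ univ.erase x,
      (Fintype.card V - 1) * #{σ : Equiv.Perm V | σ x = z ∧ σ z = y}
        ≤ #{σ : Equiv.Perm V | σ x = z} := by
    intro z hz
    have hzx : z ≠ x := by simpa using hz
    by_cases hy : y = z
    · have : ({σ : Equiv.Perm V | σ x = z ∧ σ z = y} : Finset _) = ∅ := by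
        ext σ
        simp only [mem_filter, mem_univ, true_and, notMem_empty, iff_false]
        rintro ⟨h1, h2⟩
        exact hzx (σ.injective (by rw [h1, h2, hy]))
      rw [this]; simp
    · have := ai_swap_count ({σ : Equiv.Perm V | σ x = z} : Finset _) (univ.erase z) z y (by
        intro r' hr' c hc
        simp only [mem_filter, mem_univ, true_and, mem_erase, and_true] at hr' hc ⊢
        simp only [Equiv.Perm.mul_apply, hc]
        exact Equiv.swap_apply_of_ne_of_ne (Ne.symm hy) (Ne.symm hr'))
      rw [Finset.card_erase_of_mem (mem_univ _), Finset.filter_filter] at this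
      simpa using this
  have hsub : ({σ : Equiv.Perm V | σ (σ x) = y} : Finset _) ⊆
      ({σ : Equiv.Perm V | σ x = x} : Finset _) ∪
        (univ.erase x).biUnion fun z => {σ : Equiv.Perm V | σ x = z ∧ σ z = y} := by
    intro σ hσ
    simp only [mem_filter, mem_univ, true_and] at hσ
    by_cases h : σ x = x
    · simp [h]
    · simp only [mem_union, mem_biUnion, mem_filter, mem_univ, true_and, mem_erase, and_true]
      exact Or.inr ⟨σ x, h, rfl, hσ⟩
  have h0 : #{σ : Equiv.Perm V | σ (σ x) = y} ≤ #{σ : Equiv.Perm V | σ x = x} +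
      ∑ z ∈ univ.erase x, #{σ : Equiv.Perm V | σ x = z ∧ σ z = y} :=
    (Finset.card_le_card hsub).trans ((Finset.card_union_le _ _).trans
      (Nat.add_le_add_left Finset.card_biUnion_le _))
  have h1 : (Fintype.card V - 1) * #{σ : Equiv.Perm V | σ x = x}
      ≤ Fintype.card (Equiv.Perm V) :=
    (Nat.mul_le_mul_right _ (Nat.sub_le _ _)).trans (ai_one x x)
  have h2 : ∑ z ∈ univ.erase x, #{σ : Equiv.Perm V | σ x = z}
      ≤ Fintype.card (Equiv.Perm V) := by
    rw [← Finset.card_biUnion]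
    · exact Finset.card_le_univ _
    · intro a _ b _ hab
      rw [Function.onFun, Finset.disjoint_left]
      intro c hc hc'
      simp only [mem_filter] at hc hc'
      exact hab (hc.2.symm.trans hc'.2)
  calc _ ≤ (Fintype.card V - 1) * (#{σ : Equiv.Perm V | σ x = x} +
      ∑ z ∈ univ.erase x, #{σ : Equiv.Perm V | σ x = z ∧ σ z = y}) := Nat.mul_le_mul_left _ h0
    _ = (Fintype.card V - 1) * #{σ : Equiv.Perm V | σ x = x} +
      ∑ z ∈ univ.erase x, (Fintype.card V - 1) * #{σ : Equiv.Perm V | σ x = z ∧ σ z = y} := by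
        rw [mul_add, Finset.mul_sum]
    _ ≤ Fintype.card (Equiv.Perm V) + ∑ z ∈ univ.erase x, #{σ : Equiv.Perm V | σ x = z} :=
        Nat.add_le_add h1 (Finset.sum_le_sum hz)
    _ ≤ _ := by omega

/-- permutations fixing `L` pointwise -/
noncomputable def aiQ (L : Finset V) : Finset (Equiv.Perm V) :=
  {c : Equiv.Perm V | ∀ i ∈ L, c i = i}

lemma mem_aiQ {L : Finset V} {c : Equiv.Perm V} : c ∈ aiQ L ↔ ∀ i ∈ L, c i = i := by
  simp [aiQ]

noncomputable def aiD (L : Finset V) {K : Type*} (R : K → Finset V) (w : K → V) : ℕ :=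
  #{c ∈ aiQ L | ∀ k, c (w k) ∉ R k}

lemma ai_hit (L : Finset V) (R : Finset V) (hR : Disjoint R L) (y : V) :
    (Fintype.card V - #L) * #{c ∈ aiQ L | c y ∈ R} ≤ #R * #(aiQ L) := by
  have h1 : #{c ∈ aiQ L | c y ∈ R} ≤ ∑ r ∈ R, #{c ∈ aiQ L | c y = r} := by
    refine (Finset.card_le_card ?_).trans Finset.card_biUnion_le
    intro c hc
    simp only [mem_filter, mem_biUnion] at hc ⊢
    exact ⟨_, hc.2, hc.1, rfl⟩
  refine (Nat.mul_le_mul_left _ h1).trans ?_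
  rw [Finset.mul_sum, ← smul_eq_mul, ← Finset.sum_const]
  apply Finset.sum_le_sum
  intro r hr
  rw [← Finset.card_compl]
  apply ai_swap_count
  intro r' hr' c hc
  rw [mem_aiQ] at hc ⊢
  intro i hi
  rw [Equiv.Perm.mul_apply, hc i hi]
  apply Equiv.swap_apply_of_ne_of_ne
  · rintro rfl
    exact (Finset.disjoint_left.1 hR hr hi)
  · rintro rfl
    simp [hi] at hr'

lemma ai_exists_perm {K : Type*} (p p' : K → V) (hp : p.Injective) (hp' : p'.Injective) :
    ∃ π : Equiv.Perm V, ∀ k, π (p k) = p' k := by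
  refine ⟨Equiv.extendSubtype (p := fun x => x ∈ Set.range p) (q := fun x => x ∈ Set.range p')
    ((Equiv.ofInjective p hp).symm.trans (Equiv.ofInjective p' hp')), fun k => ?_⟩
  rw [Equiv.extendSubtype_apply_of_mem _ _ (Set.mem_range_self k)]
  have : (Equiv.ofInjective p hp).symm ⟨p k, Set.mem_range_self k⟩ = k := by
    rw [Equiv.symm_apply_eq]; rfl
  simp [this]

lemma aiD_const (L : Finset V) {K : Type*} (R : K → Finset V) (w w' : K → V)
    (hw : w.Injective) (hw' : w'.Injective) (hL : ∀ k, w k ∉ L) (hL' : ∀ k, w' k ∉ L) :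
    aiD L R w ≤ aiD L R w' := by
  obtain ⟨π, hπ⟩ := ai_exists_perm (Sum.elim w' (fun x : L => (x : V)))
    (Sum.elim w (fun x : L => (x : V)))
    (hw'.sumElim Subtype.val_injective (fun a b h => hL' a (h ▸ b.2)))
    (hw.sumElim Subtype.val_injective (fun a b h => hL a (h ▸ b.2)))
  have h1 : ∀ k, π (w' k) = w k := fun k => hπ (Sum.inl k)
  have h2 : ∀ x ∈ L, π x = x := fun x hx => hπ (Sum.inr ⟨x, hx⟩)
  apply Finset.card_le_card_of_injOn (fun c => c * π)
  · intro c hc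
    simp only [coe_filter, Set.mem_ofPred_eq, mem_aiQ, Equiv.Perm.mul_apply] at hc ⊢
    refine ⟨fun i hi => by rw [h2 i hi, hc.1 i hi], fun k => by rw [h1]; exact hc.2 k⟩
  · intro a _ b _ hab
    exact mul_right_cancel hab

lemma aiD_diff (L : Finset V) {K : Type*} [Fintype K] (R : K → Finset V) (m : ℕ)
    (hR : ∀ k, Disjoint (R k) L) (hRm : ∀ k, #(R k) ≤ m) (w w' : K → V) :
    (Fintype.card V - #L) * aiD L R w ≤ (Fintype.card V - #L) * aiD L R w' +
      #{k | w k ≠ w' k} * (m * #(aiQ L)) := by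
  have h1 : aiD L R w ≤ aiD L R w' +
      ∑ k ∈ ({k | w k ≠ w' k} : Finset K), #{c ∈ aiQ L | c (w' k) ∈ R k} := by
    refine (Finset.card_le_card ?_).trans ((Finset.card_union_le _ _).trans
      (Nat.add_le_add_left Finset.card_biUnion_le _))
    intro c hc
    simp only [mem_filter, mem_union, mem_biUnion, mem_univ, true_and] at hc ⊢
    by_cases h : ∀ k, c (w' k) ∉ R k
    · exact Or.inl ⟨hc.1, h⟩
    · push Not at h
      obtain ⟨k, hk⟩ := h
      refine Or.inr ⟨k, fun h => hc.2 k (h ▸ hk), hc.1, hk⟩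
  refine (Nat.mul_le_mul_left _ h1).trans ?_
  rw [mul_add, Finset.mul_sum]
  apply Nat.add_le_add_left
  rw [← smul_eq_mul (a := #_), ← Finset.sum_const]
  apply Finset.sum_le_sum
  intro k _
  exact (ai_hit L (R k) (hR k) _).trans (Nat.mul_le_mul_right _ (hRm k))

noncomputable def aiW (L : Finset V) (σ : Equiv.Perm V) : L ⊕ L → V :=
  Sum.elim (fun x => σ x) (fun x => σ⁻¹ x)

noncomputable def aiBad (L : Finset V) (σ : Equiv.Perm V) : ℕ :=
  #{x ∈ L | σ x ∈ L} + (#{x ∈ L | σ⁻¹ x ∈ L} + #{x ∈ L | σ⁻¹ (σ⁻¹ x) ∈ L})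

lemma ai_repl (L : Finset V) (h3 : 3 * #L ≤ Fintype.card V) (σ : Equiv.Perm V) :
    ∃ w : L ⊕ L → V, w.Injective ∧ (∀ k, w k ∉ L) ∧
      #{k | w k ≠ aiW L σ k} ≤ aiBad L σ := by
  let G : Finset (L ⊕ L) := {k | Sum.elim (fun x : L => σ x ∉ L)
    (fun x : L => σ⁻¹ x ∉ L ∧ σ⁻¹ (σ⁻¹ x) ∉ L) k}
  have hGL : G.image (aiW L σ) ⊆ Lᶜ := by
    intro v hv
    simp only [mem_image, G, mem_filter, mem_univ, true_and] at hv
    obtain ⟨k, hk, rfl⟩ := hv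
    rcases k with x | x
    · simpa [aiW] using hk
    · simpa [aiW] using hk.1
  have hGi : Set.InjOn (aiW L σ) G := by
    intro a ha b hb hab
    simp only [G, coe_filter, mem_univ, true_and, Set.mem_ofPred_eq] at ha hb
    rcases a with a | a <;> rcases b with b | b
    · simp only [aiW, Sum.elim_inl] at hab
      rw [Subtype.ext (σ.injective hab)]
    · simp only [aiW, Sum.elim_inl, Sum.elim_inr] at hab
      exfalso
      apply hb.2
      rw [← hab]; simp
    · simp only [aiW, Sum.elim_inl, Sum.elim_inr] at hab
      exfalso
      apply ha.2
      rw [hab]; simp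
    · simp only [aiW, Sum.elim_inr] at hab
      rw [Subtype.ext (σ⁻¹.injective hab)]
  have hcK : Fintype.card (L ⊕ L) = 2 * #L := by simp; ring
  have hc1 : #(G.image (aiW L σ)) ≤ 2 * #L := by
    rw [← hcK]; exact Finset.card_image_le.trans (Finset.card_le_univ _)
  have hc2 : 2 * #L ≤ #(Lᶜ) := by rw [Finset.card_compl]; omega
  obtain ⟨t, ht1, ht2, ht3⟩ := Finset.exists_subsuperset_card_eq hGL hc1 hc2
  obtain ⟨g, hg⟩ := Finset.exists_equiv_extend_of_card_eq (hcK.trans ht3.symm) ht1 hGi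
  refine ⟨fun k => g k, Subtype.val_injective.comp g.injective,
    fun k => by simpa using ht2 (g k).2, ?_⟩
  have hsub : ({k | ((g k : t) : V) ≠ aiW L σ k} : Finset (L ⊕ L)) ⊆ Gᶜ := by
    intro k hk
    simp only [mem_filter, mem_univ, true_and] at hk
    rw [mem_compl]
    exact fun h => hk (hg k h)
  refine (Finset.card_le_card hsub).trans ?_
  have hsub2 : Gᶜ ⊆ (({x : L | σ x ∈ L} : Finset L).map Function.Embedding.inl) ∪
      ((({x : L | σ⁻¹ x ∈ L} : Finset L).map Function.Embedding.inr) ∪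
      (({x : L | σ⁻¹ (σ⁻¹ x) ∈ L} : Finset L).map Function.Embedding.inr)) := by
    intro k hk
    rcases k with x | x
    · simpa [G] using hk
    · simp only [G, mem_compl, mem_filter, mem_univ, true_and, Sum.elim_inr] at hk
      simp only [mem_union, Finset.mem_map, mem_filter, mem_univ, true_and]
      by_cases h : σ⁻¹ x ∈ L
      · exact Or.inr (Or.inl ⟨x, h, rfl⟩)
      · exact Or.inr (Or.inr ⟨x, by tauto, rfl⟩)
  have hcard : ∀ p : V → Prop, #({x : L | p x} : Finset L) = #{x ∈ L | p x} := by
    intro p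
    rw [← Finset.card_map (Function.Embedding.subtype (· ∈ L))]
    congr 1
    ext v
    simp [and_comm]
  refine (Finset.card_le_card hsub2).trans ((Finset.card_union_le _ _).trans ?_)
  have h4 := Finset.card_union_le
    ((({x : L | σ⁻¹ x ∈ L} : Finset L).map Function.Embedding.inr : Finset (L ⊕ L)))
    ((({x : L | σ⁻¹ (σ⁻¹ x) ∈ L} : Finset L).map Function.Embedding.inr : Finset (L ⊕ L)))
  have e1 : #({x : L | σ x ∈ L} : Finset L) = #{x ∈ L | σ x ∈ L} := by
    convert hcard (fun v => σ v ∈ L)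
  have e2 : #({x : L | σ⁻¹ x ∈ L} : Finset L) = #{x ∈ L | σ⁻¹ x ∈ L} := by
    convert hcard (fun v => σ⁻¹ v ∈ L)
  have e3 : #({x : L | σ⁻¹ (σ⁻¹ x) ∈ L} : Finset L) = #{x ∈ L | σ⁻¹ (σ⁻¹ x) ∈ L} := by
    convert hcard (fun v => σ⁻¹ (σ⁻¹ v) ∈ L)
  simp only [Finset.card_map] at h4 ⊢
  unfold aiBad
  omega

lemma ai_sum_filter (L : Finset V) (N M : ℕ) (F : Equiv.Perm V → V → V)
    (h : ∀ x y, N * #{σ : Equiv.Perm V | F σ x = y} ≤ M) :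
    N * ∑ σ : Equiv.Perm V, #{x ∈ L | F σ x ∈ L} ≤ #L * (#L * M) := by
  have h1 : ∀ σ : Equiv.Perm V, #{x ∈ L | F σ x ∈ L}
      = ∑ x ∈ L, ∑ y ∈ L, if F σ x = y then 1 else 0 := by
    intro σ
    rw [Finset.card_filter]
    apply Finset.sum_congr rfl
    intro x _
    simp
  simp_rw [h1]
  rw [Finset.sum_comm, Finset.mul_sum, ← smul_eq_mul (a := #L), ← Finset.sum_const]
  apply Finset.sum_le_sum
  intro x _
  rw [Finset.sum_comm, Finset.mul_sum, ← smul_eq_mul (a := #L), ← Finset.sum_const]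
  apply Finset.sum_le_sum
  intro y _
  rw [← Finset.card_filter]
  exact h x y

lemma aiBad_sum (L : Finset V) :
    (Fintype.card V - 1) * ∑ σ : Equiv.Perm V, aiBad L σ ≤
      4 * (#L * (#L * Fintype.card (Equiv.Perm V))) := by
  have h1 := ai_sum_filter L (Fintype.card V - 1) (Fintype.card (Equiv.Perm V))
    (fun σ x => σ x) (fun x y => (Nat.mul_le_mul_right _ (Nat.sub_le _ _)).trans (ai_one x y))
  have h2 := ai_sum_filter L (Fintype.card V - 1) (2 * Fintype.card (Equiv.Perm V))
    (fun σ x => σ (σ x)) (fun x y => ai_two x y)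
  have e1 : ∑ σ : Equiv.Perm V, #{x ∈ L | σ⁻¹ x ∈ L} = ∑ σ : Equiv.Perm V, #{x ∈ L | σ x ∈ L} :=
    Equiv.sum_comp (Equiv.inv (Equiv.Perm V)) (fun σ => #{x ∈ L | σ x ∈ L})
  have e2 : ∑ σ : Equiv.Perm V, #{x ∈ L | σ⁻¹ (σ⁻¹ x) ∈ L}
      = ∑ σ : Equiv.Perm V, #{x ∈ L | σ (σ x) ∈ L} :=
    Equiv.sum_comp (Equiv.inv (Equiv.Perm V)) (fun σ => #{x ∈ L | σ (σ x) ∈ L})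
  unfold aiBad
  rw [Finset.sum_add_distrib, Finset.sum_add_distrib, e1, e2]
  nlinarith [h1, h2]

/-- the complementary event -/
def aiBc (L : Finset V) (R : V → Finset V) (σ : Equiv.Perm V) : Prop :=
  ∀ i ∈ L, σ i ∉ R i ∧ σ⁻¹ i ∉ R i

lemma ai_conj_sum (L : Finset V) (R : V → Finset V) (A : Equiv.Perm V → Prop)
    (hA : ∀ a σ, A (a * σ * a⁻¹) ↔ A σ) :
    #(aiQ L) * #{σ | aiBc L R σ ∧ A σ} =
      ∑ σ ∈ ({σ | A σ} : Finset (Equiv.Perm V)),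
        aiD L (Sum.elim (fun x : L => R x) (fun x : L => R x)) (aiW L σ) := by
  have hc : ∀ c ∈ aiQ L, #{σ | aiBc L R σ ∧ A σ} =
      ∑ σ ∈ ({σ | A σ} : Finset (Equiv.Perm V)),
        if (∀ k, c (aiW L σ k) ∉ (Sum.elim (fun x : L => R x) (fun x : L => R x)) k)
          then 1 else 0 := by
    intro c hc
    rw [mem_aiQ] at hc
    have hc' : ∀ i ∈ L, c⁻¹ i = i := fun i hi => by
      rw [Equiv.Perm.inv_eq_iff_eq, hc i hi]
    rw [← Finset.card_filter, Finset.filter_filter]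
    symm
    apply Finset.card_bij (fun σ _ => c * σ * c⁻¹)
    · intro σ hσ
      simp only [mem_filter, mem_univ, true_and] at hσ ⊢
      refine ⟨fun i hi => ⟨?_, ?_⟩, (hA _ _).2 hσ.1⟩
      · have h := hσ.2 (Sum.inl ⟨i, hi⟩)
        rw [Equiv.Perm.mul_apply, Equiv.Perm.mul_apply, hc' i hi]
        exact h
      · have h := hσ.2 (Sum.inr ⟨i, hi⟩)
        rw [mul_inv_rev, mul_inv_rev, inv_inv, Equiv.Perm.mul_apply, Equiv.Perm.mul_apply, hc' i hi]
        exact h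
    · intro a _ b _ hab
      simpa using hab
    · intro τ hτ
      simp only [mem_filter, mem_univ, true_and] at hτ
      refine ⟨c⁻¹ * τ * c, ?_, by group⟩
      simp only [mem_filter, mem_univ, true_and]
      refine ⟨?_, ?_⟩
      · have := hA c⁻¹ τ
        rw [inv_inv] at this
        exact this.2 hτ.2
      · rintro (⟨i, hi⟩ | ⟨i, hi⟩)
        · simpa [aiW, hc i hi] using (hτ.1 i hi).1
        · simpa [aiW, hc i hi, mul_assoc] using (hτ.1 i hi).2
  rw [← smul_eq_mul, ← Finset.sum_const, Finset.sum_congr rfl hc, Finset.sum_comm]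
  apply Finset.sum_congr rfl
  intro σ _
  rw [← Finset.card_filter]
  unfold aiD
  congr!

lemma ai_main (L : Finset V) (R : V → Finset V) (A : Equiv.Perm V → Prop)
    (hA : ∀ a σ, A (a * σ * a⁻¹) ↔ A σ) (h3 : 3 * #L ≤ Fintype.card V)
    (h2 : 2 ≤ Fintype.card V)
    (hR : ∀ i ∈ L, Disjoint (R i) L) (hRm : ∀ i ∈ L, #(R i) ≤ #L) :
    |(#{σ | aiBc L R σ ∧ A σ} : ℝ) / Fintype.card (Equiv.Perm V) -
      (#{σ | aiBc L R σ} : ℝ) / Fintype.card (Equiv.Perm V) *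
        ((#{σ | A σ} : ℝ) / Fintype.card (Equiv.Perm V))| ≤
      8 * (#L : ℝ) ^ 3 / ((Fintype.card V - #L : ℝ) * (Fintype.card V - 1 : ℝ)) := by
  set RR : L ⊕ L → Finset V := Sum.elim (fun x : L => R x) (fun x : L => R x) with hRR
  have hRR1 : ∀ k, Disjoint (RR k) L := by
    rintro (x | x) <;> exact hR x x.2
  have hRR2 : ∀ k, #(RR k) ≤ #L := by
    rintro (x | x) <;> exact hRm x x.2
  choose w hw1 hw2 hw3 using ai_repl L h3
  set d := aiD L RR (w 1) with hd
  have hdc : ∀ σ, aiD L RR (w σ) = d := fun σ => le_antisymm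
    (aiD_const L RR _ _ (hw1 _) (hw1 _) (hw2 _) (hw2 _))
    (aiD_const L RR _ _ (hw1 _) (hw1 _) (hw2 _) (hw2 _))
  have hM : (0 : ℝ) < (Fintype.card V : ℝ) - #L := by
    have : #L < Fintype.card V := by omega
    have : (#L : ℝ) < Fintype.card V := by exact_mod_cast this
    linarith
  have hM1 : (0 : ℝ) < (Fintype.card V : ℝ) - 1 := by
    have : (2 : ℝ) ≤ Fintype.card V := by exact_mod_cast h2
    linarith
  have hq : (0 : ℝ) < #(aiQ L) := by
    have : 0 < #(aiQ L) := Finset.card_pos.2 ⟨1, by rw [mem_aiQ]; simp⟩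
    exact_mod_cast this
  have hF : (0 : ℝ) < Fintype.card (Equiv.Perm V) := by
    exact_mod_cast Fintype.card_pos
  set q : ℝ := (#(aiQ L) : ℝ)
  set F : ℝ := (Fintype.card (Equiv.Perm V) : ℝ)
  set M : ℝ := (Fintype.card V : ℝ) - #L with hMdef
  set m : ℝ := (#L : ℝ)
  let t : Equiv.Perm V → ℝ := fun σ => (aiD L RR (aiW L σ) : ℝ) - d
  have ht : ∀ σ, M * |t σ| ≤ aiBad L σ * (m * q) := by
    intro σ
    have a1 := aiD_diff L RR (#L) hRR1 hRR2 (w σ) (aiW L σ)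
    have a2 := aiD_diff L RR (#L) hRR1 hRR2 (aiW L σ) (w σ)
    have hsw : #{k | aiW L σ k ≠ w σ k} = #{k | w σ k ≠ aiW L σ k} := by
      simp only [ne_comm]
    rw [hsw] at a2
    rw [hdc] at a1 a2
    have hb := Nat.mul_le_mul_right (#L * #(aiQ L)) (hw3 σ)
    have a1' := a1.trans (Nat.add_le_add_left hb _)
    have a2' := a2.trans (Nat.add_le_add_left hb _)
    have hMc : ((Fintype.card V - #L : ℕ) : ℝ) = M := by
      rw [Nat.cast_sub (by omega)]
    have b1 : M * d ≤ M * (aiD L RR (aiW L σ) : ℝ) + aiBad L σ * (m * q) := by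
      rw [← hMc]; simp only [m, q]; exact_mod_cast a1'
    have b2 : M * (aiD L RR (aiW L σ) : ℝ) ≤ M * d + aiBad L σ * (m * q) := by
      rw [← hMc]; simp only [m, q]; exact_mod_cast a2'
    rw [← abs_of_pos hM, ← abs_mul, abs_le]
    constructor <;> simp only [t] <;> linarith
  have hbad : ((Fintype.card V : ℝ) - 1) * ∑ σ : Equiv.Perm V, (aiBad L σ : ℝ) ≤
      4 * (m * (m * F)) := by
    have := aiBad_sum L
    have hc : ((Fintype.card V - 1 : ℕ) : ℝ) = (Fintype.card V : ℝ) - 1 := by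
      rw [Nat.cast_sub (by omega)]; simp
    rw [← hc]
    simp only [m, F]
    exact_mod_cast this
  have hT : M * ∑ σ, |t σ| ≤ (∑ σ : Equiv.Perm V, (aiBad L σ : ℝ)) * (m * q) := by
    rw [Finset.mul_sum, Finset.sum_mul]
    exact Finset.sum_le_sum fun σ _ => ht σ
  have hm : 0 ≤ m := Nat.cast_nonneg _
  have hT2 : ∑ σ, |t σ| ≤ q * F * (4 * m ^ 3 / (M * ((Fintype.card V : ℝ) - 1))) := by
    rw [← mul_div_assoc, le_div_iff₀ (mul_pos hM hM1)]
    have := mul_le_mul_of_nonneg_right hbad (mul_nonneg hm hq.le)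
    have h5 := mul_le_mul_of_nonneg_right hT hM1.le
    nlinarith
  have key : ∀ A : Equiv.Perm V → Prop, (∀ a σ, A (a * σ * a⁻¹) ↔ A σ) →
      q * (#{σ | aiBc L R σ ∧ A σ} : ℝ) = (#{σ | A σ} : ℝ) * d +
        ∑ σ ∈ ({σ | A σ} : Finset (Equiv.Perm V)), t σ := by
    intro A hA
    have := ai_conj_sum L R A hA
    have h' : q * (#{σ | aiBc L R σ ∧ A σ} : ℝ) =
      ∑ σ ∈ ({σ | A σ} : Finset (Equiv.Perm V)), (aiD L RR (aiW L σ) : ℝ) := by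
      simp only [q]
      exact_mod_cast this
    rw [h']
    simp only [t, Finset.sum_sub_distrib, Finset.sum_const, nsmul_eq_mul]
    ring
  have k1 := key A hA
  have k2 := key (fun _ => True) (fun _ _ => Iff.rfl)
  have hu : ((univ : Finset (Equiv.Perm V)).card : ℝ) = F := by rw [Finset.card_univ]
  simp only [and_true, Finset.filter_true, hu] at k2
  have hTA : |∑ σ ∈ ({σ | A σ} : Finset (Equiv.Perm V)), t σ| ≤ ∑ σ, |t σ| :=
    (Finset.abs_sum_le_sum_abs _ _).trans
      (Finset.sum_le_sum_of_subset_of_nonneg (Finset.subset_univ _) fun _ _ _ => abs_nonneg _)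
  have hTu : |∑ σ, t σ| ≤ ∑ σ, |t σ| := Finset.abs_sum_le_sum_abs _ _
  set TA := ∑ σ ∈ ({σ | A σ} : Finset (Equiv.Perm V)), t σ
  set TU := ∑ σ, t σ
  set S := ∑ σ, |t σ|
  have ha : (#{σ | A σ} : ℝ) ≤ F := by
    rw [← hu]; exact_mod_cast Finset.card_le_univ _
  have ha0 : (0 : ℝ) ≤ (#{σ | A σ} : ℝ) := Nat.cast_nonneg _
  set a := (#{σ | A σ} : ℝ)
  have hEq : (#{σ | aiBc L R σ ∧ A σ} : ℝ) / F - (#{σ | aiBc L R σ} : ℝ) / F * (a / F)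
      = (TA - TU * (a / F)) / (q * F) := by
    rw [show (#{σ | aiBc L R σ ∧ A σ} : ℝ) = (a * d + TA) / q by
      rw [← k1]; field_simp,
      show (#{σ | aiBc L R σ} : ℝ) = (F * d + TU) / q by
      rw [← k2]; field_simp]
    field_simp
    ring
  rw [hEq, abs_div, abs_of_pos (mul_pos hq hF), div_le_iff₀ (mul_pos hq hF)]
  have haF : |a / F| ≤ 1 := by
    rw [abs_of_nonneg (div_nonneg ha0 hF.le), div_le_one hF]; exact ha
  have : |TA - TU * (a / F)| ≤ S + S := by
    refine (abs_sub _ _).trans (add_le_add hTA ?_)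
    rw [abs_mul]
    calc |TU| * |a / F| ≤ |TU| * 1 := mul_le_mul_of_nonneg_left haF (abs_nonneg _)
      _ ≤ S := by rw [mul_one]; exact hTu
  calc _ ≤ S + S := this
    _ ≤ _ := add_le_add hT2 hT2
    _ = _ := by ring

end AsympIndep

lemma ai_rho_le {n : ℕ} (σ : Equiv.Perm (Fin n)) : rhoInf σ ≤ n := by
  unfold rhoInf
  apply Finset.sup_le
  intro i _
  have := (σ i).2
  have := i.2
  omega

noncomputable def aiL (n m : ℕ) : Finset (Fin n) := {i | (i : ℕ) < m}

noncomputable def aiR (n m : ℕ) (i : Fin n) : Finset (Fin n) := {j | (i : ℕ) + n ≤ j + m}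

lemma aiL_card {n m : ℕ} (h : m ≤ n) : #(aiL n m) = m := by
  unfold aiL
  rw [Fin.card_filter_val_lt]
  simpa using h

lemma aiR_card {n m : ℕ} (i : Fin n) : #(aiR n m i) ≤ m := by
  have : #(aiR n m i) ≤ #(Finset.range m) := by
    apply Finset.card_le_card_of_injOn (fun j : Fin n => n - 1 - (j : ℕ))
    · intro j hj
      simp only [aiR, coe_filter, mem_univ, true_and, Set.mem_ofPred_eq] at hj
      have := j.2
      simp only [coe_range, Set.mem_Iio]
      omega
    · intro a _ b _ hab
      have := a.2
      have := b.2
      simp only at hab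
      apply Fin.ext
      omega
  simpa using this

lemma ai_equiv {n : ℕ} (σ : Equiv.Perm (Fin n)) (α : ℝ) (hα : 0 ≤ α) (hn : 0 < n)
    (hm : ⌊α * √n⌋₊ < n) :
    rhoInfTilde σ ≤ α ↔ ¬ aiBc (aiL n ⌊α * √n⌋₊) (aiR n ⌊α * √n⌋₊) σ := by
  have hs : 0 < √(n : ℝ) := Real.sqrt_pos.2 (by exact_mod_cast hn)
  unfold rhoInfTilde
  rw [div_le_iff₀ hs, ← Nat.cast_sub (ai_rho_le σ), ← Nat.le_floor_iff (by positivity)]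
  generalize ⌊α * √n⌋₊ = m at hm
  have h1 : n - rhoInf σ ≤ m ↔ n - m ≤ rhoInf σ := by omega
  rw [h1]
  unfold rhoInf
  rw [Finset.le_sup_iff (by simp only [bot_eq_zero']; omega)]
  unfold aiBc
  push Not
  constructor
  · rintro ⟨i, _, hi⟩
    have a1 := i.2
    have a2 := (σ i).2
    by_cases h : (i : ℕ) ≤ σ i
    · refine ⟨i, ?_, fun h' => absurd ?_ h'⟩
      · simp only [aiL, mem_filter, mem_univ, true_and]; omega
      · simp only [aiR, mem_filter, mem_univ, true_and]; omega
    · refine ⟨σ i, ?_, fun _ => ?_⟩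
      · simp only [aiL, mem_filter, mem_univ, true_and]; omega
      · simp only [aiR, mem_filter, mem_univ, true_and]
        have e : σ⁻¹ (σ i) = i := σ.symm_apply_apply i
        rw [e]; omega
  · rintro ⟨i, _, hi⟩
    by_cases h : σ i ∈ aiR n m i
    · refine ⟨i, mem_univ _, ?_⟩
      simp only [aiR, mem_filter, mem_univ, true_and] at h
      omega
    · have h' := hi h
      refine ⟨σ⁻¹ i, mem_univ _, ?_⟩
      simp only [aiR, mem_filter, mem_univ, true_and] at h'
      have e : σ (σ⁻¹ i) = i := σ.apply_symm_apply i
      rw [e]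
      omega

set_option maxHeartbeats 400000 in
lemma ai_bound {n : ℕ} (α : ℝ) (hα : 0 ≤ α) (hn : 2 ≤ n) (h3 : 3 * α ≤ √(n : ℝ))
    (A : Equiv.Perm (Fin n) → Prop) (hA : ∀ a σ, A (a * σ * a⁻¹) ↔ A σ) :
    |Pn (fun σ : Equiv.Perm (Fin n) => rhoInfTilde σ ≤ α ∧ A σ) -
      Pn (fun σ : Equiv.Perm (Fin n) => rhoInfTilde σ ≤ α) * Pn A| ≤ 24 * α ^ 3 / √(n : ℝ) := by
  have hn2 : (2 : ℝ) ≤ n := by exact_mod_cast hn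
  have hs : 0 < √(n : ℝ) := Real.sqrt_pos.2 (by linarith)
  have hss : √(n : ℝ) * √(n : ℝ) = n := Real.mul_self_sqrt (by linarith)
  have hfl : (⌊α * √n⌋₊ : ℝ) ≤ α * √n := Nat.floor_le (by positivity)
  have hm3r : 3 * (⌊α * √n⌋₊ : ℝ) ≤ n := by nlinarith
  have hm3 : 3 * ⌊α * √n⌋₊ ≤ n := by exact_mod_cast hm3r
  have heq := fun σ : Equiv.Perm (Fin n) => ai_equiv σ α hα (by omega) (by omega)
  generalize hmdef : ⌊α * √n⌋₊ = m at *
  have hL : #(aiL n m) = m := aiL_card (by omega)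
  have hmain := ai_main (aiL n m) (aiR n m) A hA (by rw [hL]; simpa using hm3) (by simpa using hn)
    (by
      intro i hi
      rw [Finset.disjoint_left]
      intro j hj hj'
      simp only [aiR, aiL, mem_filter, mem_univ, true_and] at hj hj'
      omega)
    (by intro i _; rw [hL]; exact aiR_card i)
  rw [hL, Fintype.card_fin] at hmain
  have hF : (0 : ℝ) < Fintype.card (Equiv.Perm (Fin n)) := by
    exact_mod_cast Fintype.card_pos
  have c1 : (#{σ | rhoInfTilde σ ≤ α ∧ A σ} : ℝ) =
      #{σ | A σ} - #{σ | aiBc (aiL n m) (aiR n m) σ ∧ A σ} := by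
    have := Finset.card_filter_add_card_filter_not (s := ({σ | A σ} : Finset (Equiv.Perm (Fin n))))
      (fun σ => aiBc (aiL n m) (aiR n m) σ)
    rw [Finset.filter_filter, Finset.filter_filter] at this
    simp only [heq]
    rw [eq_sub_iff_add_eq, ← Nat.cast_add, ← this]
    simp only [and_comm, add_comm]
  have c2 : (#{σ : Equiv.Perm (Fin n) | rhoInfTilde σ ≤ α} : ℝ) =
      Fintype.card (Equiv.Perm (Fin n)) - #{σ | aiBc (aiL n m) (aiR n m) σ} := by
    have := Finset.card_filter_add_card_filter_not (s := (univ : Finset (Equiv.Perm (Fin n))))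
      (fun σ => aiBc (aiL n m) (aiR n m) σ)
    rw [Finset.card_univ] at this
    simp only [heq]
    rw [eq_sub_iff_add_eq, ← Nat.cast_add, ← this, add_comm]
  have hP : Pn (fun σ : Equiv.Perm (Fin n) => rhoInfTilde σ ≤ α ∧ A σ) -
      Pn (fun σ : Equiv.Perm (Fin n) => rhoInfTilde σ ≤ α) * Pn A =
      -((#{σ | aiBc (aiL n m) (aiR n m) σ ∧ A σ} : ℝ) / Fintype.card (Equiv.Perm (Fin n)) -
      (#{σ | aiBc (aiL n m) (aiR n m) σ} : ℝ) / Fintype.card (Equiv.Perm (Fin n)) *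
        ((#{σ | A σ} : ℝ) / Fintype.card (Equiv.Perm (Fin n)))) := by
    have d1 : Pn (fun σ : Equiv.Perm (Fin n) => rhoInfTilde σ ≤ α ∧ A σ) =
        (#{σ | A σ} - #{σ | aiBc (aiL n m) (aiR n m) σ ∧ A σ} : ℝ) /
          Fintype.card (Equiv.Perm (Fin n)) := by
      rw [← c1]; unfold Pn; congr!
    have d2 : Pn (fun σ : Equiv.Perm (Fin n) => rhoInfTilde σ ≤ α) =
        (Fintype.card (Equiv.Perm (Fin n)) - #{σ | aiBc (aiL n m) (aiR n m) σ} : ℝ) /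
          Fintype.card (Equiv.Perm (Fin n)) := by
      rw [← c2]; unfold Pn; congr!
    have d3 : Pn A = (#{σ | A σ} : ℝ) / Fintype.card (Equiv.Perm (Fin n)) := rfl
    rw [d1, d2, d3]
    generalize (Fintype.card (Equiv.Perm (Fin n)) : ℝ) = F at hF
    field_simp
    ring
  rw [hP, abs_neg]
  refine hmain.trans ?_
  have hm0 : (0 : ℝ) ≤ m := Nat.cast_nonneg _
  have hd : (n : ℝ) ^ 2 / 3 ≤ ((n : ℝ) - m) * (n - 1) := by nlinarith
  have hm3' : (m : ℝ) ^ 3 ≤ (α * √n) ^ 3 := pow_le_pow_left₀ hm0 hfl 3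
  calc 8 * (m : ℝ) ^ 3 / (((n : ℝ) - m) * (n - 1)) ≤ 8 * (α * √n) ^ 3 / ((n : ℝ) ^ 2 / 3) := by
        gcongr
    _ = 24 * α ^ 3 / √(n : ℝ) := by
        rw [← hss]
        field_simp
        norm_num
        ring

/-- Spearman's uniform metric is asymptotically independent of any weakly convergent
sequence of class functions: for every `α` and every continuity point `β` of the
distribution function of the limit law `μ`,
`P_n[ρ̃_∞ ≤ α, f_n < β] − P_n[ρ̃_∞ ≤ α]·P_n[f_n < β] → 0`. -/
theorem rhoInfTilde_asymp_indep_classFun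
    (f : ∀ n : ℕ, Equiv.Perm (Fin n) → ℝ)
    (hclass : ∀ n : ℕ, ∀ a σ : Equiv.Perm (Fin n), f n (a * σ * a⁻¹) = f n σ)
    (μ : MeasureTheory.Measure ℝ) (hμ : MeasureTheory.IsProbabilityMeasure μ)
    (hweak : ∀ g : ℝ → ℝ, Continuous g → (∃ C : ℝ, ∀ x, |g x| ≤ C) →
      Tendsto (fun n : ℕ => En (fun σ => g (f n σ))) atTop (nhds (∫ x, g x ∂μ)))
    (α β : ℝ) (hβ : ContinuousAt (fun x : ℝ => (μ (Set.Iic x)).toReal) β) :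
    Tendsto (fun n : ℕ =>
        Pn (fun σ : Equiv.Perm (Fin n) => rhoInfTilde σ ≤ α ∧ f n σ < β) -
          Pn (fun σ : Equiv.Perm (Fin n) => rhoInfTilde σ ≤ α) *
            Pn (fun σ : Equiv.Perm (Fin n) => f n σ < β))
      atTop (nhds 0) := by
  rcases lt_or_ge α 0 with hα | hα
  · have h0 : ∀ (n : ℕ) (σ : Equiv.Perm (Fin n)), ¬ rhoInfTilde σ ≤ α := by
      intro n σ
      have h1 : (rhoInf σ : ℝ) ≤ n := by exact_mod_cast ai_rho_le σ
      have h2 : 0 ≤ rhoInfTilde σ := div_nonneg (by linarith) (Real.sqrt_nonneg _)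
      linarith
    simp [Pn, h0]
  · have hsq : Tendsto (fun n : ℕ => √(n : ℝ)) atTop atTop :=
      Real.tendsto_sqrt_atTop.comp tendsto_natCast_atTop_atTop
    refine squeeze_zero_norm' ?_ (hsq.const_div_atTop (24 * α ^ 3))
    filter_upwards [eventually_ge_atTop 2, hsq.eventually_ge_atTop (3 * α)] with n hn hn3
    rw [Real.norm_eq_abs]
    exact ai_bound α hα hn hn3 (fun σ => f n σ < β) (fun a σ => by rw [hclass])
end

section
/- For σ ∈ S_n, let i*(σ) be the smallest index i ∈ {1,...,n} maximizing |σ(i) − i|. Then, under the uniform measure on S_n, the probability that the cycle of σ containing i*(σ) has length at least (log n)^4 tends to 1 as n → ∞. -/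
open scoped BigOperators Classical
open Finset Filter

/-- The displacement `|σ(i) − i|` of the index `i` under `σ`. -/
def disp {n : ℕ} (σ : Equiv.Perm (Fin n)) (i : Fin n) : ℕ :=
  (((σ i : ℕ) : ℤ) - ((i : ℕ) : ℤ)).natAbs

/-- The length of the cycle of `σ` containing `i`: the cardinality of the orbit of `i`
under iteration of `σ`. -/
noncomputable def cycleLenAt {n : ℕ} (σ : Equiv.Perm (Fin n)) (i : Fin n) : ℕ :=
  (Finset.univ.filter fun j : Fin n => σ.SameCycle i j).card

/-- `i` is the smallest index maximizing `|σ(i) − i|`, i.e. `i = i*(σ)`. -/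
def isArgmaxDisp {n : ℕ} (σ : Equiv.Perm (Fin n)) (i : Fin n) : Prop :=
  (∀ j : Fin n, disp σ j ≤ disp σ i) ∧ ∀ j : Fin n, disp σ j = disp σ i → i ≤ j

theorem count_avoid {n : ℕ} (A B : Finset (Fin n)) :
    (univ.filter fun σ : Equiv.Perm (Fin n) => ∀ i ∈ A, σ i ∉ B).card * (A.card * B.card)
      ≤ n.factorial * n := by
  have h : ((univ.filter fun σ : Equiv.Perm (Fin n) => ∀ i ∈ A, σ i ∉ B) ×ˢ (A ×ˢ B)).card
      ≤ (univ : Finset (Equiv.Perm (Fin n) × Fin n)).card := by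
    apply Finset.card_le_card_of_injOn
      (fun p => (Equiv.swap (p.1 p.2.1) p.2.2 * p.1, p.1 p.2.1))
    · intro p _; simp
    · rintro ⟨σ, a, b⟩ h1 ⟨τ, c, d⟩ h2 h
      simp only [coe_product, Set.mem_prod, mem_coe, mem_filter, mem_univ, true_and] at h1 h2
      obtain ⟨hσ, ha, hb⟩ := h1
      obtain ⟨hτ, hc, hd⟩ := h2
      simp only [Prod.mk.injEq] at h
      obtain ⟨h, hv⟩ := h
      have e1 : Equiv.swap (σ a) b (σ a) = Equiv.swap (τ c) d (τ a) := by
        have := congrArg (fun f : Equiv.Perm (Fin n) => f a) h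
        simpa using this
      have hac : a = c := by
        by_contra hne
        rw [Equiv.swap_apply_left] at e1
        have h3 : τ a ≠ τ c := fun h => hne (τ.injective h)
        have h4 : τ a ≠ d := fun h => hτ a ha (h ▸ hd)
        rw [Equiv.swap_apply_of_ne_of_ne h3 h4] at e1
        exact hτ a ha (e1 ▸ hb)
      subst hac
      rw [hv] at e1
      simp only [Equiv.swap_apply_left] at e1
      subst e1
      rw [hv] at h
      have := mul_left_cancel h
      subst this
      rfl
  simpa [Finset.card_product, Fintype.card_perm] using h

theorem count_fix {n : ℕ} (i j : Fin n) :
    (univ.filter fun σ : Equiv.Perm (Fin n) => σ i = j).card * n ≤ n.factorial := by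
  have h : ((univ.filter fun σ : Equiv.Perm (Fin n) => σ i = j) ×ˢ (univ : Finset (Fin n))).card
      ≤ (univ : Finset (Equiv.Perm (Fin n))).card := by
    apply Finset.card_le_card_of_injOn (fun p => (Equiv.swap j p.2 * p.1))
    · intro p _; simp
    · rintro ⟨σ, y⟩ h1 ⟨τ, z⟩ h2 h
      simp only [coe_product, Set.mem_prod, mem_coe, mem_filter, mem_univ, true_and, and_true]
        at h1 h2
      simp only at h
      have e := congrArg (fun f : Equiv.Perm (Fin n) => f i) h
      simp only [Equiv.Perm.mul_apply, h1, h2, Equiv.swap_apply_left] at e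
      subst e
      have := mul_left_cancel h
      subst this
      rfl
  simpa [Finset.card_product, Fintype.card_perm] using h

theorem minPeriod_le {n : ℕ} (σ : Equiv.Perm (Fin n)) (i : Fin n) :
    Function.minimalPeriod σ i ≤ cycleLenAt σ i := by
  rw [← Finset.card_range (Function.minimalPeriod σ i)]
  unfold cycleLenAt
  apply Finset.card_le_card_of_injOn (fun t => σ^[t] i)
  · intro t _
    simp only [mem_coe, mem_filter, mem_univ, true_and]
    exact ⟨t, by rw [zpow_natCast, ← Equiv.Perm.iterate_eq_pow]⟩
  · intro a ha b hb h
    exact Function.iterate_injOn_Iio_minimalPeriod (by simpa using ha) (by simpa using hb) h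

theorem swap_iter {n : ℕ} (σ : Equiv.Perm (Fin n)) (i y : Fin n) (hy : ¬ σ.SameCycle i y) :
    (Equiv.swap i y * σ)^[Function.minimalPeriod σ i] i = y := by
  have hpos : 0 < Function.minimalPeriod σ i := by
    apply Function.minimalPeriod_pos_of_mem_periodicPts
    exact Function.Injective.mem_periodicPts σ.injective i
  have key : ∀ t < Function.minimalPeriod σ i, (Equiv.swap i y * σ)^[t] i = σ^[t] i := by
    intro t
    induction t with
    | zero => intro _; rfl
    | succ t ih =>
      intro ht
      rw [Function.iterate_succ_apply', ih (by omega), Function.iterate_succ_apply',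
        Equiv.Perm.mul_apply]
      apply Equiv.swap_apply_of_ne_of_ne
      · intro h
        rw [← Function.iterate_succ_apply' (f := σ)] at h
        exact Function.not_isPeriodicPt_of_pos_of_lt_minimalPeriod (by omega) ht h
      · intro h
        apply hy
        rw [← Function.iterate_succ_apply' (f := σ)] at h
        exact ⟨(t + 1 : ℕ), by rw [zpow_natCast, ← Equiv.Perm.iterate_eq_pow]; exact h⟩
  obtain ⟨l, hl⟩ : ∃ l, Function.minimalPeriod σ i = l + 1 := ⟨_, (Nat.succ_pred_eq_of_pos hpos).symm⟩
  have h2 : σ^[l + 1] i = i := hl ▸ Function.iterate_minimalPeriod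
  rw [hl, Function.iterate_succ_apply', key l (by omega), Equiv.Perm.mul_apply,
    ← Function.iterate_succ_apply' (f := σ), h2, Equiv.swap_apply_left]

theorem count_short {n : ℕ} (i j : Fin n) (hij : i ≠ j) (L : ℕ) :
    (univ.filter fun σ : Equiv.Perm (Fin n) => σ i = j ∧ cycleLenAt σ i < L).card * (n - L)
      ≤ (univ.filter fun σ : Equiv.Perm (Fin n) => σ i = j).card * L := by
  have h : ((univ.filter fun σ : Equiv.Perm (Fin n) => σ i = j ∧ cycleLenAt σ i < L).sigma
      (fun σ => univ.filter fun y => ¬ σ.SameCycle i y)).card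
      ≤ ((univ.filter fun σ : Equiv.Perm (Fin n) => σ i = j) ×ˢ (Finset.range L)).card := by
    apply Finset.card_le_card_of_injOn
      (fun p => (Equiv.swap i p.2 * p.1, Function.minimalPeriod p.1 i))
    · rintro ⟨σ, y⟩ h
      simp only [mem_coe, mem_sigma, mem_filter, mem_univ, true_and, mem_product,
        mem_range] at h ⊢
      obtain ⟨⟨h1, h2⟩, h3⟩ := h
      refine ⟨?_, (minPeriod_le σ i).trans_lt h2⟩
      rw [Equiv.Perm.mul_apply, h1]
      apply Equiv.swap_apply_of_ne_of_ne hij.symm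
      rintro rfl
      exact h3 ⟨1, by simpa using h1⟩
    · rintro ⟨σ, y⟩ h1 ⟨τ, z⟩ h2 h
      simp only [mem_coe, mem_sigma, mem_filter, mem_univ, true_and] at h1 h2
      simp only [Prod.mk.injEq] at h
      obtain ⟨h, hl⟩ := h
      have e1 := swap_iter σ i y h1.2
      have e2 := swap_iter τ i z h2.2
      rw [h, hl, e2] at e1
      subst e1
      have := mul_left_cancel h
      subst this
      rfl
  rw [Finset.card_sigma, Finset.card_product, Finset.card_range] at h
  refine le_trans ?_ h
  rw [← smul_eq_mul]
  apply Finset.card_nsmul_le_sum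
  intro σ hσ
  simp only [mem_filter, mem_univ, true_and] at hσ
  have h5 := Finset.card_filter_add_card_filter_not (s := (univ : Finset (Fin n)))
    (fun y => σ.SameCycle i y)
  have h6 := hσ.2
  unfold cycleLenAt at h6
  simp only [Finset.card_univ, Fintype.card_fin] at h5
  omega

theorem card_low (n k : ℕ) (hk : k ≤ n) : (univ.filter fun i : Fin n => (i : ℕ) < k).card = k := by
  simp [Fin.card_filter_val_lt, hk]

theorem card_high (n k : ℕ) (hk : k ≤ n) :
    (univ.filter fun i : Fin n => n - k ≤ (i : ℕ)).card = k := by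
  have h5 := Finset.card_filter_add_card_filter_not (s := (univ : Finset (Fin n)))
    (fun y => (y : ℕ) < n - k)
  rw [card_low n (n - k) (by omega)] at h5
  simp only [Finset.card_univ, Fintype.card_fin, not_lt] at h5
  omega

theorem bad_bound (n k L : ℕ) (hk : 2 * k < n) (hk0 : 0 < k) (hL : L < n) :
    ((univ.filter fun σ : Equiv.Perm (Fin n) =>
      ∃ i, isArgmaxDisp σ i ∧ cycleLenAt σ i < L).card : ℝ) ≤
      n.factorial * ((n : ℝ) / k ^ 2 + 8 * k ^ 2 * (L / (n * (n - L)))) := by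
  have hn : (0 : ℝ) < n := by exact_mod_cast (by omega : 0 < n)
  have hkr : (0 : ℝ) < k := by exact_mod_cast hk0
  have hnL : (0 : ℝ) < (n : ℝ) - L := by
    have : (L : ℝ) < n := by exact_mod_cast hL
    linarith
  set A := univ.filter fun i : Fin n => (i : ℕ) < k with hA
  set B := univ.filter fun i : Fin n => n - k ≤ (i : ℕ) with hB
  set A2 := univ.filter fun i : Fin n => (i : ℕ) < 2 * k with hA2
  set B2 := univ.filter fun i : Fin n => n - 2 * k ≤ (i : ℕ) with hB2
  set P := (A2 ×ˢ B2 ∪ B2 ×ˢ A2).filter fun p => p.1 ≠ p.2 with hP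
  have cP : (P.card : ℝ) ≤ 8 * k ^ 2 := by
    have : P.card ≤ 8 * k ^ 2 := by
      refine (Finset.card_filter_le _ _).trans ((Finset.card_union_le _ _).trans ?_)
      rw [Finset.card_product, Finset.card_product, hA2, hB2, card_low n (2 * k) (by omega),
        card_high n (2 * k) (by omega)]
      nlinarith
    exact_mod_cast this
  set S := univ.filter fun σ : Equiv.Perm (Fin n) => ∀ i ∈ A, σ i ∉ B with hS
  have cS : (S.card : ℝ) ≤ n.factorial * (n / k ^ 2) := by
    have h := count_avoid A B
    rw [hA, hB, card_low n k (by omega), card_high n k (by omega), ← hA, ← hB, ← hS] at h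
    have h' : (S.card : ℝ) * (k * k) ≤ n.factorial * n := by exact_mod_cast h
    rw [mul_div_assoc', le_div_iff₀ (by positivity)]
    linarith
  set T : Fin n × Fin n → Finset (Equiv.Perm (Fin n)) := fun p =>
    univ.filter fun σ : Equiv.Perm (Fin n) => σ p.1 = p.2 ∧ cycleLenAt σ p.1 < L with hT
  have cT : ∀ p ∈ P, ((T p).card : ℝ) ≤ n.factorial * (L / (n * (n - L))) := by
    intro p hp
    have hne : p.1 ≠ p.2 := (Finset.mem_filter.1 hp).2
    have h1 := count_short p.1 p.2 hne L
    have h2 := count_fix p.1 p.2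
    have h1' : ((T p).card : ℝ) * (n - L) ≤
        (univ.filter fun σ : Equiv.Perm (Fin n) => σ p.1 = p.2).card * L := by
      rw [← Nat.cast_sub hL.le]
      exact_mod_cast h1
    have h2' : ((univ.filter fun σ : Equiv.Perm (Fin n) => σ p.1 = p.2).card : ℝ) * n
        ≤ n.factorial := by exact_mod_cast h2
    rw [mul_div_assoc', le_div_iff₀ (by positivity)]
    calc ((T p).card : ℝ) * (n * (n - L)) = (T p).card * (n - L) * n := by ring
      _ ≤ (univ.filter fun σ : Equiv.Perm (Fin n) => σ p.1 = p.2).card * L * n := by gcongr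
      _ = (univ.filter fun σ : Equiv.Perm (Fin n) => σ p.1 = p.2).card * n * L := by ring
      _ ≤ _ := by gcongr
  have hsub : (univ.filter fun σ : Equiv.Perm (Fin n) =>
      ∃ i, isArgmaxDisp σ i ∧ cycleLenAt σ i < L) ⊆ S ∪ P.biUnion T := by
    intro σ hσ
    simp only [mem_filter, mem_univ, true_and] at hσ
    obtain ⟨i, hi, hc⟩ := hσ
    rw [Finset.mem_union]
    by_cases hs : σ ∈ S
    · exact Or.inl hs
    right
    simp only [hS, mem_filter, mem_univ, true_and, not_forall, not_not] at hs
    obtain ⟨a, ha, hb⟩ := hs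
    simp only [hA, hB, mem_filter, mem_univ, true_and] at ha hb
    have hd := hi.1 a
    unfold disp at hd
    rw [Finset.mem_biUnion]
    refine ⟨(i, σ i), ?_, ?_⟩
    · simp only [hP, hA2, hB2, mem_filter, mem_union, mem_product, mem_univ, true_and]
      have := (σ i).isLt
      have := i.isLt
      refine ⟨by omega, fun h => ?_⟩
      have h := congrArg Fin.val h
      omega
    · simp only [hT, mem_filter, mem_univ, true_and]
      exact hc
  have h1 : ((univ.filter fun σ : Equiv.Perm (Fin n) =>
      ∃ i, isArgmaxDisp σ i ∧ cycleLenAt σ i < L).card : ℝ) ≤ S.card + ∑ p ∈ P, ((T p).card : ℝ) := by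
    exact_mod_cast (Finset.card_le_card hsub).trans ((Finset.card_union_le _ _).trans
      (Nat.add_le_add_left Finset.card_biUnion_le _))
  have h2 : ∑ p ∈ P, ((T p).card : ℝ) ≤ P.card * (n.factorial * (L / (n * (n - L)))) := by
    rw [← nsmul_eq_mul]
    exact Finset.sum_le_card_nsmul _ _ _ cT
  have h3 : (P.card : ℝ) * (n.factorial * (L / (n * (n - L)))) ≤
      8 * k ^ 2 * (n.factorial * (L / (n * (n - L)))) := by gcongr
  calc _ ≤ _ := h1
    _ ≤ n.factorial * (n / k ^ 2) + 8 * k ^ 2 * (n.factorial * (L / (n * (n - L)))) := by linarith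
    _ = _ := by ring

theorem Pn_le_one {n : ℕ} (p : Equiv.Perm (Fin n) → Prop) : Pn p ≤ 1 := by
  unfold Pn
  apply div_le_one_of_le₀
  · exact_mod_cast Finset.card_le_univ _
  · positivity

theorem Pn_lower (n : ℕ) (x : ℝ) (hL : (⌈(Real.log n) ^ 4⌉₊ : ℝ) ≤ x) (hx : 8 ≤ x)
    (hxn : x ^ 3 = n) : 1 - 65 * x⁻¹ ≤ Pn (fun σ : Equiv.Perm (Fin n) =>
          ∀ i : Fin n, isArgmaxDisp σ i → (Real.log n) ^ 4 ≤ (cycleLenAt σ i : ℝ)) := by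
  set L := ⌈(Real.log n) ^ 4⌉₊ with hLdef
  set k := ⌈x ^ 2⌉₊ with hk
  have k1 : x ^ 2 ≤ k := Nat.le_ceil _
  have k2 : (k : ℝ) ≤ 2 * x ^ 2 := by
    have := Nat.ceil_lt_add_one (a := x ^ 2) (by positivity)
    nlinarith
  have kn : 2 * k < n := by
    have : (2 : ℝ) * k < n := by rw [← hxn]; nlinarith [sq_nonneg x]
    exact_mod_cast this
  have k0 : 0 < k := by
    have : (0 : ℝ) < k := by nlinarith
    exact_mod_cast this
  have Ln2 : (L : ℝ) ≤ n / 2 := by rw [← hxn]; nlinarith [sq_nonneg x]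
  have n0 : (0 : ℝ) < n := by rw [← hxn]; positivity
  have Ln : L < n := by
    have : (L : ℝ) < n := by linarith
    exact_mod_cast this
  have hb := bad_bound n k L kn k0 Ln
  have hb2 : (n : ℝ) / k ^ 2 + 8 * k ^ 2 * (L / (n * (n - L))) ≤ 65 * x⁻¹ := by
    have e1 : (n : ℝ) / k ^ 2 ≤ x ^ 3 / (x ^ 2) ^ 2 := by rw [hxn]; gcongr
    have e2 : 8 * (k : ℝ) ^ 2 * (L / (n * (n - L))) ≤
        8 * (2 * x ^ 2) ^ 2 * (x / (n * (n / 2))) := by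
      have e5 : (n : ℝ) / 2 ≤ n - L := by linarith
      have e6 : (0 : ℝ) < n - L := by linarith
      gcongr
    have e3 : x ^ 3 / (x ^ 2) ^ 2 = x⁻¹ := by field_simp
    have e4 : 8 * (2 * x ^ 2) ^ 2 * (x / (n * (n / 2))) = 64 * x⁻¹ := by
      rw [← hxn]; field_simp; norm_num
    linarith
  unfold Pn
  have hF : (0 : ℝ) < n.factorial := by exact_mod_cast n.factorial_pos
  rw [Fintype.card_perm, Fintype.card_fin, le_div_iff₀ hF]
  have h5 := Finset.card_filter_add_card_filter_not (s := (univ : Finset (Equiv.Perm (Fin n))))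
    (fun σ : Equiv.Perm (Fin n) =>
          ∀ i : Fin n, isArgmaxDisp σ i → (Real.log n) ^ 4 ≤ (cycleLenAt σ i : ℝ))
  rw [Finset.card_univ, Fintype.card_perm, Fintype.card_fin] at h5
  have h6 : (univ.filter fun σ : Equiv.Perm (Fin n) =>
      ¬ ∀ i : Fin n, isArgmaxDisp σ i → (Real.log n) ^ 4 ≤ (cycleLenAt σ i : ℝ)) =
      univ.filter fun σ : Equiv.Perm (Fin n) => ∃ i, isArgmaxDisp σ i ∧ cycleLenAt σ i < L := by
    apply Finset.filter_congr
    intro σ _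
    push Not
    simp only [hLdef, Nat.lt_ceil]
  rw [h6] at h5
  have h7 := congrArg (Nat.cast : ℕ → ℝ) h5
  push_cast at h7
  have h8 := mul_le_mul_of_nonneg_left hb2 hF.le
  have h9 := eq_sub_of_add_eq h7
  have h10 : (1 - 65 * x⁻¹) * n.factorial ≤ n.factorial - ((univ.filter fun σ : Equiv.Perm (Fin n) =>
      ∃ i, isArgmaxDisp σ i ∧ cycleLenAt σ i < L).card : ℝ) := by
    linarith
  rw [← h9] at h10
  refine h10.trans (le_of_eq ?_)
  refine congrArg (Nat.cast : ℕ → ℝ) ?_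
  congr!

/-- Under the uniform measure on `S_n`, with probability tending to `1`, the cycle of
`σ` containing the smallest index `i*(σ)` maximizing `|σ(i) − i|` has length at least
`(log n)^4`. -/
theorem cycle_of_argmax_disp_is_long :
    Tendsto (fun n : ℕ =>
        Pn (fun σ : Equiv.Perm (Fin n) =>
          ∀ i : Fin n, isArgmaxDisp σ i → (Real.log n) ^ 4 ≤ (cycleLenAt σ i : ℝ)))
      atTop (nhds 1) := by
  have hx : Tendsto (fun n : ℕ => (n : ℝ) ^ (1 / 3 : ℝ)) atTop atTop :=
    (tendsto_rpow_atTop (by norm_num)).comp tendsto_natCast_atTop_atTop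
  have hlog : ∀ᶠ n : ℕ in atTop, (Real.log n) ^ 4 ≤ 1 / 2 * (n : ℝ) ^ (1 / 3 : ℝ) := by
    have h := (isLittleO_log_rpow_rpow_atTop (4 : ℝ) (s := 1 / 3) (by norm_num)).bound
      (c := 1 / 2) (by norm_num)
    have h' := tendsto_natCast_atTop_atTop (R := ℝ) |>.eventually h
    filter_upwards [h'] with n hn
    have e : (Real.log n) ^ (4 : ℝ) = (Real.log n) ^ 4 := by
      exact_mod_cast Real.rpow_natCast (Real.log n) 4
    rw [e, Real.norm_of_nonneg (by positivity), Real.norm_of_nonneg (by positivity)] at hn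
    exact hn
  have hlow : Tendsto (fun n : ℕ => 1 - 65 * ((n : ℝ) ^ (1 / 3 : ℝ))⁻¹) atTop (nhds 1) := by
    have := (tendsto_inv_atTop_zero.comp hx).const_mul 65
    simpa using this.const_sub 1
  refine tendsto_of_tendsto_of_tendsto_of_le_of_le' hlow tendsto_const_nhds ?_
    (Eventually.of_forall fun n => Pn_le_one _)
  filter_upwards [hlog, hx.eventually_ge_atTop 8] with n h1 h2
  apply Pn_lower n _ _ h2
  · rw [← Real.rpow_natCast, ← Real.rpow_mul (by positivity)]
    norm_num
  · have := Nat.ceil_lt_add_one (a := (Real.log n) ^ 4) (by positivity)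
    linarith
end

section
/- Fix 1 ≤ q < ∞. Let σ be uniformly distributed on S_n, let μ_n = E_n[ρ_q] and s_n = √(Var_n ρ_q). Then there is a constant C such that for all n ≥ 2, sup_{x ∈ ℝ} | P_n[ (ρ^{(1)}_q(σ) − μ_n)/s_n ≤ x ] − Φ(x) | ≤ C (log n)/n^{1/2}. -/
open scoped BigOperators Classical
open Finset Filter

/-- Variance under the uniform measure on `S_n`. -/
noncomputable def VarN {n : ℕ} (g : Equiv.Perm (Fin n) → ℝ) : ℝ :=
  En (fun σ => (g σ - En g) ^ 2)

/-- Spearman's metric `ρ_q(σ) = Σ_i |σ(i) − i|^q`. -/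
noncomputable def rhoq (q : ℝ) {n : ℕ} (σ : Equiv.Perm (Fin n)) : ℝ :=
  ∑ i : Fin n, |((σ i : ℕ) : ℝ) - ((i : ℕ) : ℝ)| ^ q

/-- The oscillation statistic `ρ^{(1)}_q(σ) = Σ_i |σ(i+1) − σ(i)|^q`, indices mod `n`. -/
noncomputable def oscStat (q : ℝ) {n : ℕ} (σ : Equiv.Perm (Fin n)) : ℝ :=
  ∑ i : Fin n, |((σ (finRotate n i) : ℕ) : ℝ) - ((σ i : ℕ) : ℝ)| ^ q

/-- The standard normal cumulative distribution function `Φ`. -/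
noncomputable def stdNormalCDF (x : ℝ) : ℝ :=
  ∫ t in Set.Iic x, Real.exp (-t ^ 2 / 2) / Real.sqrt (2 * Real.pi)


section GaussA
open MeasureTheory

noncomputable def gphi (t : ℝ) : ℝ := Real.exp (-t ^ 2 / 2) / Real.sqrt (2 * Real.pi)

lemma gphi_eq : gphi = ProbabilityTheory.gaussianPDFReal 0 1 := by
  funext t
  simp [gphi, ProbabilityTheory.gaussianPDFReal, div_eq_inv_mul]

lemma gphi_pos (t : ℝ) : 0 < gphi t := by unfold gphi; positivity

lemma gphi_integrable : Integrable gphi := by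
  rw [gphi_eq]; exact ProbabilityTheory.integrable_gaussianPDFReal 0 1

lemma gphi_integral : ∫ t, gphi t = 1 := by
  rw [gphi_eq]; exact ProbabilityTheory.integral_gaussianPDFReal_eq_one 0 one_ne_zero

lemma gphi_cont : Continuous gphi := by unfold gphi; fun_prop

lemma gphi_neg (t : ℝ) : gphi (-t) = gphi t := by simp [gphi]

lemma gphi_deriv (t : ℝ) : HasDerivAt gphi (-t * gphi t) t := by
  have h1 : HasDerivAt (fun t : ℝ => -t ^ 2 / 2) (-t) t := by
    have := ((hasDerivAt_pow 2 t).neg).div_const 2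
    exact this.congr_deriv (by simp; ring)
  have := h1.exp.div_const (Real.sqrt (2 * Real.pi))
  exact this.congr_deriv (by unfold gphi; ring)

lemma gphi_le_one (t : ℝ) : gphi t ≤ 1 := by
  unfold gphi
  rw [div_le_one (by positivity)]
  have h1 : Real.exp (-t ^ 2 / 2) ≤ 1 := by
    rw [Real.exp_le_one_iff]; nlinarith [sq_nonneg t]
  have h2 : (1:ℝ) ≤ Real.sqrt (2 * Real.pi) := by
    rw [Real.one_le_sqrt]; linarith [Real.pi_gt_three]
  linarith

lemma cdf_eq (x : ℝ) : stdNormalCDF x = ∫ t in Set.Iic x, gphi t := rfl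

lemma cdf_nonneg (x : ℝ) : 0 ≤ stdNormalCDF x := by
  rw [cdf_eq]; exact integral_nonneg fun t => (gphi_pos t).le

lemma cdf_le_one (x : ℝ) : stdNormalCDF x ≤ 1 := by
  rw [cdf_eq, ← gphi_integral]
  exact setIntegral_le_integral gphi_integrable (ae_of_all _ fun t => (gphi_pos t).le)

lemma cdf_lip {x y : ℝ} (h : x ≤ y) : stdNormalCDF y ≤ stdNormalCDF x + (y - x) := by
  rw [cdf_eq, cdf_eq]
  have := intervalIntegral.integral_Iic_sub_Iic (μ := volume) (gphi_integrable.integrableOn (s := Set.Iic x))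
    (gphi_integrable.integrableOn (s := Set.Iic y))
  have h2 : ∫ t in x..y, gphi t ≤ ∫ t in x..y, (1:ℝ) :=
    intervalIntegral.integral_mono_on h (gphi_cont.intervalIntegrable _ _)
      (continuous_const.intervalIntegrable _ _) (fun t _ => gphi_le_one t)
  simp at h2
  linarith

lemma gphi_tendsto : Tendsto gphi atTop (nhds 0) := by
  unfold gphi
  rw [← zero_div (Real.sqrt (2 * Real.pi))]
  apply Tendsto.div_const
  apply Real.tendsto_exp_atBot.comp
  have : Tendsto (fun t : ℝ => t ^ 2 / 2) atTop atTop :=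
    (tendsto_pow_atTop two_ne_zero).atTop_div_const (by norm_num)
  have h2 := tendsto_neg_atTop_atBot.comp this
  refine h2.congr fun t => ?_
  simp [neg_div]

lemma mills {w : ℝ} (hw : 0 ≤ w) : w * ∫ t in Set.Ioi w, gphi t ≤ gphi w := by
  have hd : ∀ t ∈ Set.Ici w, HasDerivAt (fun t => -gphi t) (t * gphi t) t := by
    intro t _
    exact (gphi_deriv t).neg.congr_deriv (by ring)
  have ht : Tendsto (fun t => -gphi t) atTop (nhds 0) := by simpa using gphi_tendsto.neg
  have hi := integrableOn_Ioi_deriv_of_nonneg' hd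
    (fun t ht => mul_nonneg (hw.trans (le_of_lt ht)) (gphi_pos t).le) ht
  have h1 := integral_Ioi_of_hasDerivAt_of_tendsto' hd hi ht
  rw [← integral_const_mul]
  calc ∫ t in Set.Ioi w, w * gphi t ≤ ∫ t in Set.Ioi w, t * gphi t := by
        apply setIntegral_mono_on (gphi_integrable.integrableOn.const_mul w) hi measurableSet_Ioi
        intro t ht
        exact mul_le_mul_of_nonneg_right (le_of_lt ht) (gphi_pos t).le
    _ = gphi w := by rw [h1]; simp

lemma mills' {w : ℝ} (hw : w ≤ 0) : -w * ∫ t in Set.Iic w, gphi t ≤ gphi w := by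
  have h := mills (w := -w) (by linarith)
  rw [gphi_neg, ← integral_comp_neg_Iic] at h
  simpa [gphi_neg] using h

lemma stein_sol (h : ℝ → ℝ) (hc : Continuous h) (h0 : ∀ t, 0 ≤ h t) (h1 : ∀ t, h t ≤ 1) :
    ∃ f f' : ℝ → ℝ, (∀ w, HasDerivAt f (f' w) w) ∧
      (∀ w, f' w = w * f w + h w - ∫ t, h t * gphi t) ∧
      (∀ w, |f w| ≤ 6) ∧ (∀ w, |f' w| ≤ 2) := by
  have hint : Integrable (fun t => h t * gphi t) := by
    refine gphi_integrable.mono' (hc.mul gphi_cont).aestronglyMeasurable (ae_of_all _ fun t => ?_)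
    rw [Real.norm_eq_abs, abs_mul, abs_of_nonneg (h0 t), abs_of_pos (gphi_pos t)]
    nlinarith [gphi_pos t, h1 t]
  set N := ∫ t, h t * gphi t with hN
  have hN0 : 0 ≤ N := integral_nonneg fun t => mul_nonneg (h0 t) (gphi_pos t).le
  have hN1 : N ≤ 1 := by
    rw [← gphi_integral]
    refine integral_mono hint gphi_integrable fun t => ?_
    simp only
    nlinarith [gphi_pos t, h1 t]
  set k : ℝ → ℝ := fun t => (h t - N) * gphi t with hk
  have hkc : Continuous k := (hc.sub continuous_const).mul gphi_cont
  have hki : Integrable k := by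
    have := hint.sub (gphi_integrable.const_mul N)
    refine this.congr (ae_of_all _ fun t => ?_)
    simp [hk]; ring
  have hk0 : ∫ t, k t = 0 := by
    have : ∫ t, k t = (∫ t, h t * gphi t) - ∫ t, N * gphi t := by
      rw [← integral_sub hint (gphi_integrable.const_mul N)]
      congr 1; funext t; simp [hk]; ring
    rw [this, integral_const_mul, gphi_integral, ← hN]; ring
  have hkb : ∀ t, |k t| ≤ gphi t := by
    intro t
    have : |h t - N| ≤ 1 := by rw [abs_le]; constructor <;> linarith [h0 t, h1 t]
    simp only [hk, abs_mul, abs_of_pos (gphi_pos t)]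
    nlinarith [gphi_pos t]
  set F : ℝ → ℝ := fun w => ∫ t in Set.Iic w, k t with hF
  have hFd : ∀ w, HasDerivAt F (k w) w := by
    intro w
    have e : F = fun w => F 0 + ∫ t in (0:ℝ)..w, k t := by
      funext w
      have := intervalIntegral.integral_Iic_sub_Iic (μ := volume) (hki.integrableOn (s := Set.Iic 0))
        (hki.integrableOn (s := Set.Iic w))
      simp only [hF]; linarith
    rw [e]
    exact (hkc.integral_hasStrictDerivAt 0 w).hasDerivAt.const_add _
  have hFs : ∀ s : Set ℝ, |∫ t in s, k t| ≤ ∫ t in s, gphi t := by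
    intro s
    calc |∫ t in s, k t| ≤ ∫ t in s, |k t| := abs_integral_le_integral_abs
      _ ≤ _ := integral_mono hki.abs.integrableOn gphi_integrable.integrableOn hkb
  have hF1 : ∀ w, |F w| ≤ 1 := by
    intro w
    exact (hFs _).trans (cdf_le_one w)
  have hFneg : ∀ w, F w = - ∫ t in Set.Ioi w, k t := by
    intro w
    have := integral_add_compl (measurableSet_Iic (a := w)) hki
    rw [Set.compl_Iic, hk0] at this
    simp only [hF]; linarith
  have hwF : ∀ w, |w * F w| ≤ gphi w := by
    intro w
    rw [abs_mul]
    rcases le_total 0 w with hw | hw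
    · rw [abs_of_nonneg hw, hFneg, abs_neg]
      exact (mul_le_mul_of_nonneg_left (hFs _) hw).trans (mills hw)
    · rw [abs_of_nonpos hw]
      exact (mul_le_mul_of_nonneg_left (hFs _) (by linarith)).trans (mills' hw)
  refine ⟨fun w => F w / gphi w, fun w => w * (F w / gphi w) + h w - N, ?_, fun w => rfl, ?_, ?_⟩
  · intro w
    have := (hFd w).div (gphi_deriv w) (gphi_pos w).ne'
    refine this.congr_deriv ?_
    have := (gphi_pos w).ne'
    simp only [hk]
    field_simp
    ring
  · intro w
    rw [abs_div, abs_of_pos (gphi_pos w), div_le_iff₀ (gphi_pos w)]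
    rcases le_total 1 |w| with hw | hw
    · have := hwF w
      rw [abs_mul] at this
      nlinarith [gphi_pos w, abs_nonneg (F w)]
    · have h3 : (1:ℝ)/6 ≤ gphi w := by
        unfold gphi
        have e1 : Real.sqrt (2 * Real.pi) ≤ 3 := by
          rw [Real.sqrt_le_left (by norm_num)]
          linarith [Real.pi_lt_d2]
        have e2 : (1:ℝ)/2 ≤ Real.exp (-w^2/2) := by
          have := Real.add_one_le_exp (-w^2/2)
          have h4 : w^2 ≤ 1 := by rw [← sq_abs]; nlinarith [abs_nonneg w]
          linarith
        rw [le_div_iff₀ (by positivity)]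
        linarith
      linarith [hF1 w]
  · intro w
    have e : |w * (F w / gphi w)| ≤ 1 := by
      rw [← mul_div_assoc, abs_div, abs_of_pos (gphi_pos w), div_le_one (gphi_pos w)]
      exact hwF w
    rw [abs_le] at e ⊢
    constructor <;> simp only <;> linarith [h0 w, h1 w]

noncomputable def ramp (z d t : ℝ) : ℝ := max 0 (min 1 ((z + d - t) / d))

lemma ramp_cont (z d : ℝ) : Continuous (ramp z d) := by unfold ramp; fun_prop
lemma ramp_nonneg (z d t : ℝ) : 0 ≤ ramp z d t := le_max_left _ _
lemma ramp_le_one (z d t : ℝ) : ramp z d t ≤ 1 := max_le zero_le_one (min_le_left _ _)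
lemma ramp_one {z d t : ℝ} (hd : 0 < d) (h : t ≤ z) : ramp z d t = 1 := by
  have : 1 ≤ (z + d - t) / d := by rw [le_div_iff₀ hd]; linarith
  simp [ramp, this]
lemma ramp_zero {z d t : ℝ} (hd : 0 < d) (h : z + d ≤ t) : ramp z d t = 0 := by
  have : (z + d - t) / d ≤ 0 := div_nonpos_of_nonpos_of_nonneg (by linarith) hd.le
  simp only [ramp]
  exact max_eq_left ((min_le_right _ _).trans this)

lemma ramp_int (z d : ℝ) : Integrable (fun t => ramp z d t * gphi t) := by
  refine gphi_integrable.mono' ((ramp_cont z d).mul gphi_cont).aestronglyMeasurable (ae_of_all _ fun t => ?_)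
  rw [Real.norm_eq_abs, abs_mul, abs_of_nonneg (ramp_nonneg z d t), abs_of_pos (gphi_pos t)]
  nlinarith [gphi_pos t, ramp_le_one z d t]

lemma ramp_upper {z d : ℝ} (hd : 0 < d) : ∫ t, ramp z d t * gphi t ≤ stdNormalCDF (z + d) := by
  rw [cdf_eq, ← integral_indicator measurableSet_Iic]
  refine integral_mono (ramp_int z d) (gphi_integrable.indicator measurableSet_Iic) fun t => ?_
  simp only
  by_cases ht : t ≤ z + d
  · rw [Set.indicator_of_mem (by exact ht)]
    nlinarith [gphi_pos t, ramp_le_one z d t]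
  · rw [ramp_zero hd (not_le.mp ht).le, Set.indicator_of_notMem (by exact ht)]; simp

lemma ramp_lower {z d : ℝ} (hd : 0 < d) : stdNormalCDF z ≤ ∫ t, ramp z d t * gphi t := by
  rw [cdf_eq, ← integral_indicator measurableSet_Iic]
  refine integral_mono (gphi_integrable.indicator measurableSet_Iic) (ramp_int z d) fun t => ?_
  simp only
  by_cases ht : t ≤ z
  · rw [Set.indicator_of_mem (by exact ht), ramp_one hd ht]; simp
  · rw [Set.indicator_of_notMem (by exact ht)]
    exact mul_nonneg (ramp_nonneg _ _ _) (gphi_pos t).le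

end GaussA

section CombB
open Equiv

noncomputable def Wst {n : ℕ} (a : Fin n → Fin n → ℝ) (σ : Perm (Fin n)) : ℝ := ∑ i, a i (σ i)

lemma Wst_diff {n : ℕ} (a : Fin n → Fin n → ℝ) (M : ℝ) (hM : ∀ i j, |a i j| ≤ M)
    (σ τ : Perm (Fin n)) :
    |Wst a σ - Wst a τ| ≤ 2 * M * ((univ.filter fun i => σ i ≠ τ i).card : ℝ) := by
  unfold Wst
  rw [← sum_sub_distrib]
  refine (abs_sum_le_sum_abs _ _).trans ?_
  rw [card_eq_sum_ones, Nat.cast_sum, sum_filter, mul_sum]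
  refine sum_le_sum fun i _ => ?_
  split_ifs with h
  · have := abs_sub (a i (σ i)) (a i (τ i))
    have h1 := hM i (σ i)
    have h2 := hM i (τ i)
    simp only [Nat.cast_one]; linarith
  · push Not at h
    simp [h]

lemma card_swap_mul {n : ℕ} (σ : Perm (Fin n)) (x y : Fin n) :
    (univ.filter fun i => (swap x y * σ) i ≠ σ i).card ≤ 2 := by
  have : (univ.filter fun i => (swap x y * σ) i ≠ σ i) ⊆ {σ.symm x, σ.symm y} := by
    intro i hi
    have h := (mem_filter.mp hi).2
    simp only [Perm.mul_apply] at h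
    simp only [mem_insert, mem_singleton]
    by_contra h2
    push Not at h2
    apply h
    apply swap_apply_of_ne_of_ne
    · intro h3; apply h2.1; rw [← h3]; simp
    · intro h3; apply h2.2; rw [← h3]; simp
  exact (card_le_card this).trans card_le_two

lemma Wst_swap_mul {n : ℕ} (a : Fin n → Fin n → ℝ) (M : ℝ) (hM : ∀ i j, |a i j| ≤ M)
    (σ : Perm (Fin n)) (x y : Fin n) : |Wst a (swap x y * σ) - Wst a σ| ≤ 4 * M := by
  have hM0 : 0 ≤ M := (abs_nonneg _).trans (hM x x)
  refine (Wst_diff a M hM _ _).trans ?_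
  have : ((univ.filter fun i => (swap x y * σ) i ≠ σ i).card : ℝ) ≤ 2 := by
    exact_mod_cast card_swap_mul σ x y
  nlinarith

def bq {n : ℕ} (a : Fin n → Fin n → ℝ) (i j k l : Fin n) : ℝ := a i k + a j l - a i l - a j k

lemma Wst_mul_swap {n : ℕ} (a : Fin n → Fin n → ℝ) (σ : Perm (Fin n)) (i j : Fin n) :
    Wst a σ - Wst a (σ * swap i j) = bq a i j (σ i) (σ j) := by
  unfold Wst bq
  by_cases hij : i = j
  · subst hij; simp
  rw [← sum_sub_distrib]
  have : ∀ x, x ∉ ({i, j} : Finset (Fin n)) → a x (σ x) - a x ((σ * swap i j) x) = 0 := by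
    intro x hx
    simp only [mem_insert, mem_singleton, not_or] at hx
    rw [Perm.mul_apply, swap_apply_of_ne_of_ne hx.1 hx.2, sub_self]
  rw [← sum_subset (subset_univ ({i, j} : Finset (Fin n))) (fun x _ hx => this x hx), sum_pair hij]
  simp; ring

lemma bq_sum {n : ℕ} (a : Fin n → Fin n → ℝ) (ha : ∑ i, ∑ j, a i j = 0) (σ : Perm (Fin n)) :
    ∑ i, ∑ j, bq a i j (σ i) (σ j) = 2 * n * Wst a σ := by
  unfold bq Wst
  simp only [sum_sub_distrib, sum_add_distrib, sum_const, card_univ, Fintype.card_fin, nsmul_eq_mul]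
  have h1 : ∀ i, ∑ j, a i (σ j) = ∑ j, a i j := fun i => Equiv.sum_comp σ (a i)
  have h2 : ∑ i, ∑ j, a j (σ i) = 0 := by
    rw [sum_comm]; simp only [h1, ha]
  simp only [h1, ha, h2, ← mul_sum]
  ring

/-- Exchangeable pair identity. -/
lemma exch {n : ℕ} (a : Fin n → Fin n → ℝ) (ha : ∑ i, ∑ j, a i j = 0) (f : ℝ → ℝ) :
    4 * n * ∑ σ : Perm (Fin n), Wst a σ * f (Wst a σ) =
    ∑ i, ∑ j, ∑ σ : Perm (Fin n), bq a i j (σ i) (σ j) * (f (Wst a σ) - f (Wst a (σ * swap i j))) := by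
  have h1 : ∀ i j, ∑ σ : Perm (Fin n), bq a i j (σ i) (σ j) * f (Wst a (σ * swap i j)) =
      - ∑ σ : Perm (Fin n), bq a i j (σ i) (σ j) * f (Wst a σ) := by
    intro i j
    rw [← sum_neg_distrib, ← Equiv.sum_comp (Equiv.mulRight (swap i j))]
    refine sum_congr rfl fun σ _ => ?_
    simp [bq, mul_assoc]
    ring
  have h2 : ∑ i, ∑ j, ∑ σ : Perm (Fin n), bq a i j (σ i) (σ j) * f (Wst a σ) =
      2 * n * ∑ σ : Perm (Fin n), Wst a σ * f (Wst a σ) := by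
    rw [mul_sum]
    have : ∀ σ : Perm (Fin n), 2 * n * (Wst a σ * f (Wst a σ)) =
        ∑ i, ∑ j, bq a i j (σ i) (σ j) * f (Wst a σ) := by
      intro σ
      rw [← mul_assoc, ← bq_sum a ha σ, sum_mul]
      simp only [sum_mul]
    simp only [this]
    exact (sum_congr rfl fun i _ => sum_comm).trans sum_comm
  simp only [mul_sub, sum_sub_distrib, h1, h2, sum_neg_distrib]
  ring

def S1 {n : ℕ} (i k : Fin n) (σ : Perm (Fin n)) : Perm (Fin n) := swap (σ i) k * σ

lemma S1_apply {n : ℕ} (i k : Fin n) (σ : Perm (Fin n)) : S1 i k σ i = k := by simp [S1]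

lemma S1_S1 {n : ℕ} (i k : Fin n) (σ : Perm (Fin n)) : S1 i (σ i) (S1 i k σ) = σ := by
  have : S1 i (σ i) (S1 i k σ) = swap (S1 i k σ i) (σ i) * (swap (σ i) k * σ) := rfl
  rw [this, S1_apply, swap_comm, ← mul_assoc, swap_mul_self, one_mul]

lemma S1_apply_ne {n : ℕ} {i j k : Fin n} {σ : Perm (Fin n)} (hij : i ≠ j) (h : k ≠ σ i) :
    S1 j k σ i = σ i := by
  simp only [S1, Perm.mul_apply]
  exact swap_apply_of_ne_of_ne (fun h => hij (σ.injective h)) h.symm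

/-- involution on pairs -/
def inv1 {n : ℕ} (i : Fin n) : (Perm (Fin n) × Fin n) ≃ (Perm (Fin n) × Fin n) where
  toFun p := (S1 i p.2 p.1, p.1 i)
  invFun p := (S1 i p.2 p.1, p.1 i)
  left_inv p := by simp [S1_S1, S1_apply]
  right_inv p := by simp [S1_S1, S1_apply]

lemma inv_sum {n : ℕ} (i : Fin n) (H : Perm (Fin n) → Fin n → ℝ) :
    ∑ σ, ∑ k, H σ k = ∑ σ, ∑ k, H (S1 i k σ) (σ i) := by
  rw [← Fintype.sum_prod_type', ← Fintype.sum_prod_type' (fun σ k => H (S1 i k σ) (σ i)),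
    ← Equiv.sum_comp (inv1 i)]
  rfl

lemma couple2 {n : ℕ} {i j : Fin n} (hij : i ≠ j) (φ : Fin n → Fin n → ℝ) (hφ : ∀ k, φ k k = 0)
    (G : Perm (Fin n) → ℝ) :
    ∑ k, ∑ l, φ k l * ∑ σ, G (S1 j l (S1 i k σ)) =
      n * (n - 1) * ∑ σ : Perm (Fin n), φ (σ i) (σ j) * G σ := by
  have h1 : ∑ k, ∑ l, φ k l * ∑ σ, G (S1 j l (S1 i k σ)) =
      ∑ σ : Perm (Fin n), ∑ k, ∑ l, φ (S1 i k σ i) l * G (S1 j l (S1 i k σ)) := by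
    simp only [S1_apply, mul_sum]
    exact (sum_congr rfl fun i _ => sum_comm).trans sum_comm
  rw [h1, ← inv_sum i (fun σ _ => ∑ l, φ (σ i) l * G (S1 j l σ))]
  simp only [sum_const, card_univ, Fintype.card_fin, nsmul_eq_mul]
  rw [← mul_sum, mul_assoc]
  congr 1
  have h2 : ∀ (σ : Perm (Fin n)) (l : Fin n), φ (σ i) l * G (S1 j l σ) =
      if l ≠ σ i then φ (S1 j l σ i) (S1 j l σ j) * G (S1 j l σ) else 0 := by
    intro σ l
    split_ifs with h
    · rw [S1_apply_ne hij h, S1_apply]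
    · push Not at h
      rw [h, hφ, zero_mul]
  have h3 : ∀ (σ : Perm (Fin n)) (l : Fin n),
      (if l ≠ σ i then φ (S1 j l σ i) (S1 j l σ j) * G (S1 j l σ) else 0) =
      if σ j ≠ S1 j l σ i then φ (S1 j l σ i) (S1 j l σ j) * G (S1 j l σ) else 0 := by
    intro σ l
    by_cases h : l = σ i
    · have : S1 j l σ i = σ j := by simp [S1, h]
      subst h; simp [this]
    · have : σ j ≠ S1 j l σ i := by
        rw [S1_apply_ne hij h]; exact fun h => hij (σ.injective h).symm
      simp [h, this]
  simp only [h2]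
  simp only [h3]
  rw [← inv_sum j (fun σ k => if k ≠ σ i then φ (σ i) (σ j) * G σ else 0), mul_sum]
  refine sum_congr rfl fun σ _ => ?_
  rw [← sum_filter, sum_const, nsmul_eq_mul]
  congr 1
  rw [filter_ne' univ (σ i), card_erase_of_mem (mem_univ _), card_univ, Fintype.card_fin]
  have : 1 ≤ n := i.pos
  push_cast [this]; ring

noncomputable def pw {n : ℕ} (a : Fin n → Fin n → ℝ) (i j k l : Fin n) : ℝ :=
  (bq a i j k l) ^ 2 / (4 * n * (n * (n - 1)))

lemma zero_bias {n : ℕ} (hn : 2 ≤ n) (a : Fin n → Fin n → ℝ) (ha : ∑ i, ∑ j, a i j = 0) (M : ℝ)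
    (hM : ∀ i j, |a i j| ≤ M) (f f' : ℝ → ℝ) (hf : ∀ w, HasDerivAt f (f' w) w) :
    ∃ ξ : Fin n → Fin n → Fin n → Fin n → Perm (Fin n) → ℝ,
      (∀ i j k l σ, |ξ i j k l σ - Wst a σ| ≤ 12 * M) ∧
      ∑ σ : Perm (Fin n), Wst a σ * f (Wst a σ) =
        ∑ i, ∑ j, ∑ k, ∑ l, pw a i j k l * ∑ σ : Perm (Fin n), f' (ξ i j k l σ) := by
  have mvt : ∀ x y : ℝ, ∃ c, |c - x| ≤ |x - y| ∧ f x - f y = (x - y) * f' c := by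
    intro x y
    rcases lt_trichotomy x y with h | h | h
    · obtain ⟨c, hc, e⟩ := exists_hasDerivAt_eq_slope f f' h
        (fun t _ => (hf t).continuousAt.continuousWithinAt) (fun t _ => hf t)
      refine ⟨c, ?_, ?_⟩
      · rw [abs_of_pos (by linarith [hc.1]), abs_of_neg (by linarith)]; linarith [hc.2]
      · rw [e]; have : y - x ≠ 0 := by linarith
        field_simp; ring
    · exact ⟨x, by simp, by simp [h]⟩
    · obtain ⟨c, hc, e⟩ := exists_hasDerivAt_eq_slope f f' h
        (fun t _ => (hf t).continuousAt.continuousWithinAt) (fun t _ => hf t)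
      refine ⟨c, ?_, ?_⟩
      · rw [abs_of_neg (by linarith [hc.2]), abs_of_pos (by linarith)]; linarith [hc.1]
      · rw [e]; have : x - y ≠ 0 := by linarith
        field_simp
  choose c hc1 hc2 using mvt
  let ζ : Fin n → Fin n → Perm (Fin n) → ℝ := fun i j σ => c (Wst a σ) (Wst a (σ * swap i j))
  have hζ : ∀ i j σ, |ζ i j σ - Wst a σ| ≤ 4 * M := by
    intro i j σ
    refine (hc1 _ _).trans ?_
    rw [abs_sub_comm]
    have : σ * swap i j = swap (σ i) (σ j) * σ := by
      rw [swap_apply_apply]; group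
    rw [this]
    exact Wst_swap_mul a M hM _ _ _
  refine ⟨fun i j k l σ => ζ i j (S1 j l (S1 i k σ)), ?_, ?_⟩
  · intro i j k l σ
    have h1 := hζ i j (S1 j l (S1 i k σ))
    have h2 : |Wst a (S1 j l (S1 i k σ)) - Wst a (S1 i k σ)| ≤ 4 * M := Wst_swap_mul a M hM _ _ _
    have h3 : |Wst a (S1 i k σ) - Wst a σ| ≤ 4 * M := Wst_swap_mul a M hM _ _ _
    rw [abs_le] at *
    constructor <;> linarith [h1.1, h1.2, h2.1, h2.2, h3.1, h3.2]
  · have hn' : (2:ℝ) ≤ n := by exact_mod_cast hn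
    have key := exch a ha f
    have h4 : (4 * n : ℝ) ≠ 0 := by positivity
    rw [← mul_right_inj' h4, key, mul_sum]
    refine sum_congr rfl fun i _ => ?_
    rw [mul_sum]
    refine sum_congr rfl fun j _ => ?_
    by_cases hij : i = j
    · subst hij
      have : ∀ k l, bq a i i k l = 0 := by intro k l; unfold bq; ring
      simp [pw, this]
    · have e1 : ∀ σ : Perm (Fin n),
          bq a i j (σ i) (σ j) * (f (Wst a σ) - f (Wst a (σ * swap i j))) =
          (bq a i j (σ i) (σ j))^2 * f' (ζ i j σ) := by
        intro σ
        rw [hc2, Wst_mul_swap]; ring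
      simp only [e1]
      have := couple2 hij (fun k l => (bq a i j k l)^2) (fun k => by simp [bq])
        (fun σ => f' (ζ i j σ))
      have h5 : (n * (n-1) : ℝ) ≠ 0 := by
        have : (0:ℝ) < n - 1 := by linarith
        positivity
      rw [← mul_right_inj' h5, ← this, mul_sum, mul_sum]
      refine sum_congr rfl fun k _ => ?_
      rw [mul_sum, mul_sum]
      refine sum_congr rfl fun l _ => ?_
      unfold pw
      have : (n:ℝ) - 1 ≠ 0 := by linarith
      field_simp

lemma pw_total {n : ℕ} (hn : 2 ≤ n) (a : Fin n → Fin n → ℝ) (ha : ∑ i, ∑ j, a i j = 0) :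
    En (fun σ => (Wst a σ)^2) = ∑ i, ∑ j, ∑ k, ∑ l, pw a i j k l := by
  obtain ⟨ξ, -, h⟩ := zero_bias hn a ha (∑ i, ∑ j, |a i j|) (fun i j =>
    (single_le_sum (f := fun j => |a i j|) (fun _ _ => abs_nonneg _) (mem_univ j)).trans
    (single_le_sum (f := fun i => ∑ j, |a i j|) (fun _ _ => sum_nonneg fun _ _ => abs_nonneg _)
      (mem_univ i))) (fun x => x) (fun _ => 1) (fun w => hasDerivAt_id w)
  unfold En
  simp only [pow_two]
  rw [h]
  simp only [sum_const, card_univ, nsmul_eq_mul, mul_one, ← sum_mul]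
  rw [mul_div_assoc, div_self, mul_one]
  positivity

lemma En_Wst {n : ℕ} (hn : 2 ≤ n) (a : Fin n → Fin n → ℝ) (ha : ∑ i, ∑ j, a i j = 0) :
    En (Wst a) = 0 := by
  have := exch a ha (fun _ => 1)
  simp only [sub_self, mul_zero, sum_const_zero, mul_one] at this
  have hn' : (2:ℝ) ≤ n := by exact_mod_cast hn
  have h4 : (4 * n : ℝ) ≠ 0 := by positivity
  unfold En
  rw [(mul_eq_zero.mp this).resolve_left h4, zero_div]

end CombB

section BE
open Equiv

lemma En_mono {n : ℕ} {f g : Perm (Fin n) → ℝ} (h : ∀ σ, f σ ≤ g σ) : En f ≤ En g := by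
  unfold En
  exact div_le_div_of_nonneg_right (sum_le_sum fun σ _ => h σ) (by positivity)

lemma En_const {n : ℕ} (c : ℝ) : En (fun _ : Perm (Fin n) => c) = c := by
  unfold En
  rw [sum_const, card_univ, nsmul_eq_mul, mul_comm, mul_div_assoc, div_self, mul_one]
  positivity

lemma En_add {n : ℕ} (f g : Perm (Fin n) → ℝ) : En (fun σ => f σ + g σ) = En f + En g := by
  unfold En; rw [sum_add_distrib, add_div]

lemma En_sub {n : ℕ} (f g : Perm (Fin n) → ℝ) : En (fun σ => f σ - g σ) = En f - En g := by
  unfold En; rw [sum_sub_distrib, sub_div]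

lemma En_mul {n : ℕ} (c : ℝ) (f : Perm (Fin n) → ℝ) : En (fun σ => c * f σ) = c * En f := by
  unfold En; rw [← mul_sum, mul_div_assoc]

lemma En_abs {n : ℕ} (f : Perm (Fin n) → ℝ) : |En f| ≤ En (fun σ => |f σ|) := by
  unfold En
  rw [abs_div, abs_of_nonneg (by positivity : (0:ℝ) ≤ (Fintype.card (Perm (Fin n)) : ℝ))]
  exact div_le_div_of_nonneg_right (abs_sum_le_sum_abs _ _) (by positivity)

lemma Pn_eq {n : ℕ} (p : Perm (Fin n) → Prop) : Pn p = En (fun σ => if p σ then 1 else 0) := by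
  unfold Pn En
  rw [card_eq_sum_ones, Nat.cast_sum, sum_filter]
  simp

lemma stein_bound {n : ℕ} (hn : 2 ≤ n) (a : Fin n → Fin n → ℝ) (ha : ∑ i, ∑ j, a i j = 0) (M : ℝ)
    (hM : ∀ i j, |a i j| ≤ M) (hv : En (fun σ => (Wst a σ)^2) = 1)
    (h : ℝ → ℝ) (hc : Continuous h) (h0 : ∀ t, 0 ≤ h t) (h1 : ∀ t, h t ≤ 1)
    (B1 B2 : Perm (Fin n) → ℝ)
    (hB : ∀ σ x, |x - Wst a σ| ≤ 12 * M → B1 σ ≤ h x ∧ h x ≤ B2 σ) :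
    En B1 ≤ (∫ t, h t * gphi t) + 96 * M ∧ (∫ t, h t * gphi t) - 96 * M ≤ En B2 := by
  obtain ⟨f, f', hf, he, hf6, hf2⟩ := stein_sol h hc h0 h1
  set N := ∫ t, h t * gphi t
  obtain ⟨ξ, hξ, hz⟩ := zero_bias hn a ha M hM f f' hf
  have hM0 : 0 ≤ M := by
    have i : Fin n := ⟨0, by omega⟩
    exact (abs_nonneg _).trans (hM i i)
  have hz' : En (fun σ => Wst a σ * f (Wst a σ)) =
      ∑ i, ∑ j, ∑ k, ∑ l, pw a i j k l * En (fun σ => f' (ξ i j k l σ)) := by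
    unfold En
    rw [hz]
    simp only [sum_div, mul_div_assoc]
  have hp : ∀ i j k l, 0 ≤ pw a i j k l := by
    intro i j k l
    unfold pw
    have hn' : (2:ℝ) ≤ n := by exact_mod_cast hn
    have : (0:ℝ) ≤ n - 1 := by linarith
    positivity
  have htot := pw_total hn a ha
  rw [hv] at htot
  have hlip : ∀ x y, |f x - f y| ≤ 2 * |x - y| := by
    intro x y
    have := Convex.norm_image_sub_le_of_norm_hasDerivWithin_le (f := f) (f' := f') (s := Set.univ)
      (C := 2) (x := y) (y := x) (fun w _ => (hf w).hasDerivWithinAt) (fun w _ => hf2 w) convex_univ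
      (Set.mem_univ _) (Set.mem_univ _)
    simpa [Real.norm_eq_abs] using this
  have hW1 : En (fun σ => |Wst a σ|) ≤ 1 := by
    have : En (fun σ => |Wst a σ|) ≤ En (fun σ => 1/2 + 1/2 * (Wst a σ)^2) := by
      apply En_mono
      intro σ
      rw [← sq_abs]
      nlinarith [sq_nonneg (|Wst a σ| - 1)]
    rw [En_add, En_const, En_mul, hv] at this
    linarith
  -- for each quadruple
  have hq : ∀ i j k l, |En (fun σ => f' (ξ i j k l σ)) -
      (En (fun σ => h (ξ i j k l σ)) - N) - En (fun σ => Wst a σ * f (Wst a σ))| ≤ 96 * M := by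
    intro i j k l
    have e1 : En (fun σ => f' (ξ i j k l σ)) -
      (En (fun σ => h (ξ i j k l σ)) - N) - En (fun σ => Wst a σ * f (Wst a σ)) =
      En (fun σ => f' (ξ i j k l σ) - (h (ξ i j k l σ) - N) - Wst a σ * f (Wst a σ)) := by
      rw [En_sub, En_sub, En_sub, En_const]
    rw [e1]
    refine (En_abs _).trans ?_
    have : En (fun σ => |f' (ξ i j k l σ) - (h (ξ i j k l σ) - N) - Wst a σ * f (Wst a σ)|) ≤
        En (fun σ => 72 * M + 24 * M * |Wst a σ|) := by
      apply En_mono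
      intro σ
      set x := ξ i j k l σ
      set w := Wst a σ
      have hx : |x - w| ≤ 12 * M := hξ i j k l σ
      have e2 : f' x - (h x - N) - w * f w = (x - w) * f x + w * (f x - f w) := by
        rw [he]; ring
      rw [e2]
      refine (abs_add_le _ _).trans ?_
      rw [abs_mul, abs_mul]
      have g1 : |x - w| * |f x| ≤ (12 * M) * 6 :=
        mul_le_mul hx (hf6 x) (abs_nonneg _) (by linarith)
      have g2 : |w| * |f x - f w| ≤ |w| * (2 * (12 * M)) :=
        mul_le_mul_of_nonneg_left ((hlip x w).trans (by linarith)) (abs_nonneg _)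
      linarith
    rw [En_add, En_const, En_mul] at this
    nlinarith
  set A := En (fun σ => Wst a σ * f (Wst a σ)) with hA
  constructor
  · by_contra hcon
    push Not at hcon
    -- En f'(ξ) ≥ A + (En B1 - N) - 96 M > A
    have : ∀ i j k l, A + (En B1 - N - 96 * M) ≤ En (fun σ => f' (ξ i j k l σ)) := by
      intro i j k l
      have h1 := (abs_le.mp (hq i j k l)).1
      have h2 : En B1 ≤ En (fun σ => h (ξ i j k l σ)) :=
        En_mono fun σ => (hB σ _ (hξ i j k l σ)).1
      linarith
    have h2 : A ≥ (A + (En B1 - N - 96 * M)) * ∑ i, ∑ j, ∑ k, ∑ l, pw a i j k l := by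
      rw [hz']
      simp only [mul_sum]
      refine sum_le_sum fun i _ => sum_le_sum fun j _ => sum_le_sum fun k _ => sum_le_sum fun l _ => ?_
      rw [mul_comm]
      rw [← hz']
      exact mul_le_mul_of_nonneg_left (this i j k l) (hp i j k l)
    rw [← htot] at h2
    linarith
  · by_contra hcon
    push Not at hcon
    have : ∀ i j k l, En (fun σ => f' (ξ i j k l σ)) ≤ A + (En B2 - N + 96 * M) := by
      intro i j k l
      have h1 := (abs_le.mp (hq i j k l)).2
      have h2 : En (fun σ => h (ξ i j k l σ)) ≤ En B2 :=
        En_mono fun σ => (hB σ _ (hξ i j k l σ)).2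
      linarith
    have h2 : A ≤ (A + (En B2 - N + 96 * M)) * ∑ i, ∑ j, ∑ k, ∑ l, pw a i j k l := by
      rw [hz']
      simp only [mul_sum]
      refine sum_le_sum fun i _ => sum_le_sum fun j _ => sum_le_sum fun k _ => sum_le_sum fun l _ => ?_
      rw [← hz', mul_comm (A + _)]
      exact mul_le_mul_of_nonneg_left (this i j k l) (hp i j k l)
    rw [← htot] at h2
    linarith

theorem comb_BE {n : ℕ} (hn : 2 ≤ n) (a : Fin n → Fin n → ℝ) (ha : ∑ i, ∑ j, a i j = 0) (M : ℝ)
    (hM : ∀ i j, |a i j| ≤ M) (hv : En (fun σ => (Wst a σ)^2) = 1) (z : ℝ) :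
    |Pn (fun σ => Wst a σ ≤ z) - stdNormalCDF z| ≤ 120 * M := by
  have hMpos : 0 < M := by
    have i : Fin n := ⟨0, by omega⟩
    have hM0 : 0 ≤ M := (abs_nonneg _).trans (hM i i)
    rcases hM0.eq_or_lt with h | h
    · exfalso
      have h0 : ∀ i j, a i j = 0 := fun i j => by
        have := hM i j; rw [← h] at this; exact abs_nonpos_iff.mp this
      have : ∀ σ, Wst a σ = 0 := fun σ => by simp [Wst, h0]
      simp only [this] at hv
      rw [En_const] at hv
      norm_num at hv
    · exact h
  set d := 12 * M with hd
  have hdpos : 0 < d := by positivity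
  rw [Pn_eq]
  have up := (stein_bound hn a ha M hM hv (ramp (z + d) d) (ramp_cont _ _) (ramp_nonneg _ _)
    (ramp_le_one _ _) (fun σ => if Wst a σ ≤ z then 1 else 0) (fun _ => 1) (by
      intro σ x hx
      refine ⟨?_, ramp_le_one _ _ _⟩
      split_ifs with hh
      · rw [ramp_one hdpos]
        have := (abs_le.mp hx).2
        linarith
      · exact ramp_nonneg _ _ _)).1
  have lo := (stein_bound hn a ha M hM hv (ramp (z - d - d) d) (ramp_cont _ _) (ramp_nonneg _ _)
    (ramp_le_one _ _) (fun _ => 0) (fun σ => if Wst a σ ≤ z then 1 else 0) (by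
      intro σ x hx
      refine ⟨ramp_nonneg _ _ _, ?_⟩
      split_ifs with hh
      · exact ramp_le_one _ _ _
      · rw [ramp_zero hdpos]
        have := (abs_le.mp hx).1
        linarith)).2
  have u2 := ramp_upper (z := z + d) hdpos
  have l2 := ramp_lower (z := z - d - d) hdpos
  have u3 := cdf_lip (x := z) (y := z + d + d) (by linarith)
  have l3 := cdf_lip (x := z - d - d) (y := z) (by linarith)
  rw [abs_le]
  constructor <;> linarith

end BE

section VarD
open Equiv

noncomputable def dq (q : ℝ) {n : ℕ} (i j : Fin n) : ℝ := |((j : ℕ) : ℝ) - ((i : ℕ) : ℝ)| ^ q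

lemma rhoq_eq (q : ℝ) {n : ℕ} (σ : Perm (Fin n)) : rhoq q σ = Wst (dq q) σ := rfl

lemma dq_nonneg (q : ℝ) {n : ℕ} (i j : Fin n) : 0 ≤ dq q i j := by unfold dq; positivity

lemma dq_le {q : ℝ} (hq : 1 ≤ q) {n : ℕ} (i j : Fin n) : dq q i j ≤ (n:ℝ) ^ q := by
  unfold dq
  apply Real.rpow_le_rpow (abs_nonneg _) _ (by linarith)
  have h1 : ((i:ℕ):ℝ) ≤ n := by exact_mod_cast i.2.le
  have h2 : ((j:ℕ):ℝ) ≤ n := by exact_mod_cast j.2.le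
  have h3 : (0:ℝ) ≤ ((i:ℕ):ℝ) := by positivity
  have h4 : (0:ℝ) ≤ ((j:ℕ):ℝ) := by positivity
  rw [abs_le]; constructor <;> linarith

lemma ind_lo {n r : ℕ} (hr : r ≤ n) : ∑ i : Fin n, (if (i:ℕ) < r then (1:ℝ) else 0) = r := by
  rw [Fin.sum_univ_eq_sum_range (fun i => if i < r then (1:ℝ) else 0), ← sum_filter]
  have : (range n).filter (fun i => i < r) = range r := by
    ext x; simp; omega
  rw [this]; simp

lemma ind_hi {n r : ℕ} (hr : r ≤ n) : ∑ i : Fin n, (if n ≤ (i:ℕ) + r then (1:ℝ) else 0) = r := by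
  rw [← ind_lo hr, ← Equiv.sum_comp Fin.revPerm]
  refine sum_congr rfl fun i _ => ?_
  simp only [Fin.revPerm_apply, Fin.val_rev]
  have := i.2
  congr 1
  simp only [eq_iff_iff]
  omega

lemma bq_big {q : ℝ} (hq : 1 ≤ q) {n r : ℕ} (hr : 4 * r ≤ n) (i j k l : Fin n)
    (hi : (i:ℕ) < r) (hk : (k:ℕ) < r) (hj : n ≤ (j:ℕ) + r) (hl : n ≤ (l:ℕ) + r) :
    4 * ((n:ℝ)/4) ^ (2*q) ≤ (bq (dq q) i j k l)^2 := by
  set u := ((n:ℝ)/4) ^ q with hu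
  have hu0 : 0 ≤ u := by positivity
  have hr' : 4 * (r:ℝ) ≤ n := by exact_mod_cast hr
  have hi' : ((i:ℕ):ℝ) < r := by exact_mod_cast hi
  have hk' : ((k:ℕ):ℝ) < r := by exact_mod_cast hk
  have hj' : (n:ℝ) ≤ ((j:ℕ):ℝ) + r := by exact_mod_cast hj
  have hl' : (n:ℝ) ≤ ((l:ℕ):ℝ) + r := by exact_mod_cast hl
  have hj2 : ((j:ℕ):ℝ) ≤ n := by exact_mod_cast j.2.le
  have hl2 : ((l:ℕ):ℝ) ≤ n := by exact_mod_cast l.2.le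
  have hi0 : (0:ℝ) ≤ ((i:ℕ):ℝ) := by positivity
  have hk0 : (0:ℝ) ≤ ((k:ℕ):ℝ) := by positivity
  have s1 : dq q i k ≤ u := by
    apply Real.rpow_le_rpow (abs_nonneg _) _ (by linarith)
    rw [abs_le]; constructor <;> linarith
  have s2 : dq q j l ≤ u := by
    apply Real.rpow_le_rpow (abs_nonneg _) _ (by linarith)
    rw [abs_le]; constructor <;> linarith
  have h2u : 2 * u ≤ ((n:ℝ)/2)^q := by
    have : (n:ℝ)/2 = 2 * (n/4) := by ring
    rw [this, Real.mul_rpow (by norm_num) (by positivity)]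
    apply mul_le_mul_of_nonneg_right _ hu0
    calc (2:ℝ) = 2 ^ (1:ℝ) := by simp
      _ ≤ 2 ^ q := Real.rpow_le_rpow_of_exponent_le (by norm_num) hq
  have s3 : 2 * u ≤ dq q i l := by
    refine h2u.trans ?_
    apply Real.rpow_le_rpow (by positivity) _ (by linarith)
    refine le_trans ?_ (le_abs_self _)
    linarith
  have s4 : 2 * u ≤ dq q j k := by
    refine h2u.trans ?_
    apply Real.rpow_le_rpow (by positivity) _ (by linarith)
    refine le_trans ?_ (neg_le_abs _)
    linarith
  have e : ((n:ℝ)/4) ^ (2*q) = u^2 := by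
    rw [hu, mul_comm, Real.rpow_mul (by positivity)]; norm_num
  rw [e]
  have : bq (dq q) i j k l ≤ -(2 * u) := by unfold bq; linarith
  nlinarith

lemma bq_shift {n : ℕ} (d : Fin n → Fin n → ℝ) (m : ℝ) (i j k l : Fin n) :
    bq (fun i j => d i j - m) i j k l = bq d i j k l := by unfold bq; ring

lemma var_lower {q : ℝ} (hq : 1 ≤ q) {n : ℕ} (hn : 4 ≤ n) (m : ℝ)
    (ha : ∑ i : Fin n, ∑ j : Fin n, (dq q i j - m) = 0) :
    (n:ℝ) * ((n:ℝ)/4) ^ (2*q) / 4096 ≤ En (fun σ => (Wst (fun i j : Fin n => dq q i j - m) σ)^2) := by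
  rw [pw_total (by omega) _ ha]
  set r := n / 4 with hr
  have hr4 : 4 * r ≤ n := by omega
  have hr8 : n ≤ 8 * r := by omega
  have hn' : (4:ℝ) ≤ n := by exact_mod_cast hn
  have hr8' : (n:ℝ) ≤ 8 * r := by exact_mod_cast hr8
  set U := ((n:ℝ)/4) ^ (2*q) with hU
  have hU0 : 0 ≤ U := by positivity
  have step : ∑ i : Fin n, ∑ j : Fin n, ∑ k : Fin n, ∑ l : Fin n,
      (if (i:ℕ) < r then (1:ℝ) else 0) * ((if n ≤ (j:ℕ) + r then (1:ℝ) else 0) *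
      ((if (k:ℕ) < r then (1:ℝ) else 0) * ((if n ≤ (l:ℕ) + r then (1:ℝ) else 0) * (U / n^3)))) ≤
      ∑ i : Fin n, ∑ j, ∑ k, ∑ l, pw (fun i j => dq q i j - m) i j k l := by
    refine sum_le_sum fun i _ => sum_le_sum fun j _ => sum_le_sum fun k _ => sum_le_sum fun l _ => ?_
    have hpos : 0 ≤ pw (fun i j : Fin n => dq q i j - m) i j k l := by
      unfold pw
      have : (0:ℝ) ≤ n - 1 := by linarith
      positivity
    by_cases hi : (i:ℕ) < r
    swap
    · simpa [hi] using hpos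
    by_cases hj : n ≤ (j:ℕ) + r
    swap
    · simpa [hj] using hpos
    by_cases hk : (k:ℕ) < r
    swap
    · simpa [hk] using hpos
    by_cases hl : n ≤ (l:ℕ) + r
    swap
    · simpa [hl] using hpos
    simp only [hi, hj, hk, hl, if_true, one_mul]
    unfold pw
    rw [bq_shift]
    have := bq_big hq hr4 i j k l hi hk hj hl
    have hn1 : (0:ℝ) < n - 1 := by linarith
    rw [div_le_div_iff₀ (by positivity) (by positivity)]
    have e1 : U * (4 * n * (n * (n - 1))) ≤ U * (4 * n^3) := by
      apply mul_le_mul_of_nonneg_left _ hU0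
      nlinarith [sq_nonneg (n:ℝ)]
    have e2 : 4 * U * n^3 ≤ (bq (dq q) i j k l)^2 * n^3 :=
      mul_le_mul_of_nonneg_right this (by positivity)
    linarith
  refine le_trans ?_ step
  simp only [← mul_sum, ← sum_mul, ind_lo (show r ≤ n by omega), ind_hi (show r ≤ n by omega)]
  have h4 : (n:ℝ)^4 ≤ 4096 * (r:ℝ)^4 := by
    have := pow_le_pow_left₀ (by positivity) hr8' 4
    linarith [this, mul_pow (8:ℝ) r 4]
  have e : (r:ℝ) * (r * (r * (r * (U / n^3)))) = r^4 * U / n^3 := by ring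
  rw [e, div_le_div_iff₀ (by positivity) (by positivity)]
  nlinarith

theorem normalized {q : ℝ} (hq : 1 ≤ q) {n : ℕ} (hn : 4 ≤ n) :
    ∃ a : Fin n → Fin n → ℝ, ∑ i, ∑ j, a i j = 0 ∧
      (∀ i j, |a i j| ≤ (64 * 4 ^ q) / Real.sqrt n) ∧ En (fun σ => (Wst a σ)^2) = 1 ∧
      ∀ σ : Perm (Fin n), Wst a σ =
        (rhoq q σ - En (rhoq q (n := n))) / Real.sqrt (VarN (rhoq q (n := n))) := by
  have hn' : (4:ℝ) ≤ n := by exact_mod_cast hn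
  set m : ℝ := (∑ i : Fin n, ∑ j : Fin n, dq q i j) / (n * n) with hm
  have hsum : ∑ i : Fin n, ∑ j : Fin n, (dq q i j - m) = 0 := by
    simp only [sum_sub_distrib, sum_const, card_univ, Fintype.card_fin, nsmul_eq_mul]
    rw [hm]; field_simp; ring
  set a0 : Fin n → Fin n → ℝ := fun i j => dq q i j - m with ha0
  have hW0 : ∀ σ : Perm (Fin n), Wst a0 σ = rhoq q σ - n * m := by
    intro σ
    rw [rhoq_eq]
    simp [Wst, ha0, sum_sub_distrib]
  have hmean : En (rhoq q (n := n)) = n * m := by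
    have h1 := En_Wst (by omega) a0 hsum
    have h2 : En (Wst a0) = En (fun σ => rhoq q σ - n * m) := congrArg En (funext hW0)
    rw [h1, En_sub, En_const] at h2
    have h3 : En (fun σ => rhoq q (n := n) σ) = En (rhoq q (n := n)) := rfl
    linarith
  have hvar : VarN (rhoq q (n := n)) = En (fun σ => (Wst a0 σ)^2) := by
    unfold VarN
    rw [hmean]
    simp only [hW0]
  have hvl := var_lower hq hn m hsum
  rw [← ha0, ← hvar] at hvl
  set V := VarN (rhoq q (n := n))
  set s := Real.sqrt V with hs
  have hUe : ((n:ℝ)/4) ^ (2*q) = (((n:ℝ)/4)^q)^2 := by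
    rw [mul_comm, Real.rpow_mul (by positivity)]; norm_num
  have hsl : Real.sqrt n * ((n:ℝ)/4)^q / 64 ≤ s := by
    apply Real.le_sqrt_of_sq_le
    refine le_trans (le_of_eq ?_) hvl
    rw [hUe, div_pow, mul_pow, Real.sq_sqrt (by positivity)]
    norm_num
  have hs0 : 0 < s := lt_of_lt_of_le (by positivity) hsl
  have hV0 : 0 < V := Real.sqrt_pos.mp hs0
  have hWa : ∀ σ : Perm (Fin n), Wst (fun i j => a0 i j / s) σ = Wst a0 σ / s := by
    intro σ; simp [Wst, sum_div]
  refine ⟨fun i j => a0 i j / s, ?_, ?_, ?_, ?_⟩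
  · simp only [← sum_div]
    rw [show ∑ i, ∑ j, a0 i j = 0 from hsum, zero_div]
  · intro i j
    have hm0 : 0 ≤ m := div_nonneg (sum_nonneg fun _ _ => sum_nonneg fun _ _ => dq_nonneg _ _ _) (by positivity)
    have hm1 : m ≤ (n:ℝ)^q := by
      rw [hm, div_le_iff₀ (by positivity)]
      calc ∑ i : Fin n, ∑ j : Fin n, dq q i j ≤ ∑ i : Fin n, ∑ j : Fin n, (n:ℝ)^q :=
            sum_le_sum fun i _ => sum_le_sum fun j _ => dq_le hq i j
        _ = _ := by simp; ring
    have h1 : |a0 i j| ≤ (n:ℝ)^q := by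
      have := dq_nonneg q i j
      have := dq_le hq i j
      rw [abs_le]; constructor <;> simp only [ha0] <;> linarith
    rw [abs_div, abs_of_pos hs0, div_le_div_iff₀ hs0 (by positivity)]
    have h2 : (n:ℝ)^q = 4^q * ((n:ℝ)/4)^q := by
      rw [← Real.mul_rpow (by norm_num) (by positivity)]; congr 1; ring
    calc |a0 i j| * Real.sqrt n ≤ (4^q * ((n:ℝ)/4)^q) * Real.sqrt n := by
          rw [← h2]; exact mul_le_mul_of_nonneg_right h1 (by positivity)
      _ = (64 * 4^q) * (Real.sqrt n * ((n:ℝ)/4)^q / 64) := by ring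
      _ ≤ _ := mul_le_mul_of_nonneg_left hsl (by positivity)
  · have : (fun σ : Perm (Fin n) => (Wst (fun i j => a0 i j / s) σ)^2) =
        fun σ => (1/V) * (Wst a0 σ)^2 := by
      funext σ
      rw [hWa, div_pow, hs, Real.sq_sqrt hV0.le]; ring
    rw [this, En_mul, ← hvar]
    field_simp
  · intro σ
    rw [hWa, hW0, hmean]

end VarD

section Coup
open Equiv Equiv.Perm

noncomputable def Dis {n : ℕ} (σ τ : Perm (Fin n)) : ℕ := (univ.filter fun i => σ i ≠ τ i).card

lemma Dis_tri {n : ℕ} (σ τ ρ : Perm (Fin n)) : Dis σ ρ ≤ Dis σ τ + Dis τ ρ := by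
  unfold Dis
  refine (card_le_card ?_).trans (card_union_le _ _)
  intro i hi
  have h := (mem_filter.mp hi).2
  rw [mem_union, mem_filter, mem_filter]
  by_contra hc
  simp only [mem_univ, true_and, not_or, not_not] at hc
  exact h (hc.1.trans hc.2)

lemma Dis_ins {n : ℕ} (x : Fin (n+1)) (σ τ : Perm (Fin n)) :
    Dis (decomposeFin.symm (x, σ)) (decomposeFin.symm (x, τ)) ≤ Dis σ τ := by
  unfold Dis
  have : (univ.filter fun i => (decomposeFin.symm (x, σ)) i ≠ (decomposeFin.symm (x, τ)) i) ⊆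
      (univ.filter fun i => σ i ≠ τ i).image Fin.succ := by
    intro i hi
    have h := (mem_filter.mp hi).2
    rw [mem_image]
    revert h
    refine Fin.cases ?_ (fun i => ?_) i
    · simp
    · intro h
      refine ⟨i, ?_, rfl⟩
      rw [mem_filter]
      refine ⟨mem_univ _, fun e => h ?_⟩
      simp [e]
  exact (card_le_card this).trans card_image_le

lemma ins_swap {n : ℕ} (x : Fin (n+1)) (σ : Perm (Fin n)) :
    decomposeFin.symm (x, σ) = swap 0 x * decomposeFin.symm (0, σ) := by
  ext i
  refine Fin.cases ?_ (fun i => ?_) i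
  · simp
  · simp

lemma Dis_ins2 {n : ℕ} (x : Fin (n+1)) (σ τ : Perm (Fin n)) :
    Dis (decomposeFin.symm (x, σ)) (decomposeFin.symm (0, τ)) ≤ Dis σ τ + 2 := by
  refine (Dis_tri _ (decomposeFin.symm (0, σ)) _).trans ?_
  have h1 := Dis_ins 0 σ τ
  have h2 : Dis (decomposeFin.symm (x, σ)) (decomposeFin.symm (0, σ)) ≤ 2 := by
    rw [ins_swap]; exact card_swap_mul _ _ _
  omega

lemma rot_inv {n : ℕ} (H : Perm (Fin (n+1)) → Fin (n+1) → ℝ)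
    (hH : ∀ σ y, H (σ * finRotate (n+1)) y = H σ y) (k : Fin (n+1)) :
    ∑ σ, H σ (σ k) = ∑ σ, H σ (σ 0) := by
  induction k using Fin.induction with
  | zero => rfl
  | succ k ih =>
    rw [← ih, ← Equiv.sum_comp (Equiv.mulRight (finRotate (n+1))) (fun σ => H σ (σ k.castSucc))]
    refine sum_congr rfl fun σ _ => ?_
    simp only [Equiv.coe_mulRight, hH, Perm.mul_apply]
    congr 2
    rw [finRotate_apply]
    simp

lemma rot_sum {n : ℕ} (H : Perm (Fin (n+1)) → Fin (n+1) → ℝ)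
    (hH : ∀ σ y, H (σ * finRotate (n+1)) y = H σ y) :
    ∑ σ, ∑ y, H σ y = (n+1) * ∑ σ, H σ (σ 0) := by
  have : ∀ σ : Perm (Fin (n+1)), ∑ y, H σ y = ∑ k, H σ (σ k) := fun σ => (Equiv.sum_comp σ (H σ)).symm
  simp only [this]
  rw [sum_comm]
  simp only [rot_inv H hH]
  simp

lemma conj_rot {n : ℕ} (σ : Perm (Fin n)) :
    (σ * finRotate n) * finRotate n * (σ * finRotate n)⁻¹ = σ * finRotate n * σ⁻¹ := by group

lemma ins_conj {n : ℕ} (e : Perm (Fin (n+1))) :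
    decomposeFin.symm (0, e) * finRotate (n+2) * (decomposeFin.symm (0, e))⁻¹ =
      decomposeFin.symm ((e 0).succ, e * finRotate (n+1) * e⁻¹) := by
  rw [mul_inv_eq_iff_eq_mul, finRotate_succ_eq_decomposeFin]
  ext i
  congr 1
  refine Fin.cases ?_ (fun x => ?_) i
  · simp only [Perm.mul_apply, decomposeFin_symm_apply_zero]
    rw [← Fin.succ_zero_eq_one, decomposeFin_symm_apply_succ]; simp
  · simp only [Perm.mul_apply, decomposeFin_symm_apply_succ, swap_self, Equiv.refl_apply]
    rw [show e⁻¹ (e x) = x by simp]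
    rw [← Fin.succ_zero_eq_one]
    by_cases h : finRotate (n+1) x = 0
    · simp [h]
    · rw [swap_apply_of_ne_of_ne (Fin.succ_ne_zero _) (fun h' => h (Fin.succ_injective _ h')),
        swap_apply_of_ne_of_ne (Fin.succ_ne_zero _)
        (fun h' => h (e.injective (Fin.succ_injective _ h')))]
      simp

lemma card_perm_succ (n : ℕ) : (Fintype.card (Perm (Fin (n+1))) : ℝ) =
    (n+1) * Fintype.card (Perm (Fin n)) := by
  rw [Fintype.card_perm, Fintype.card_perm, Fintype.card_fin, Fintype.card_fin, Nat.factorial_succ]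
  push_cast; ring

lemma sum_ins {n : ℕ} (h : Perm (Fin (n+1)) → ℝ) :
    ∑ σ, h σ = ∑ x, ∑ e, h (decomposeFin.symm (x, e)) := by
  rw [← Equiv.sum_comp decomposeFin.symm h, Fintype.sum_prod_type]

lemma En_succ {n : ℕ} (h : Perm (Fin (n+1)) → ℝ) :
    En h = En (fun e => ∑ x, h (decomposeFin.symm (x, e))) / (n+1) := by
  unfold En
  rw [sum_ins, sum_comm, card_perm_succ, mul_comm, div_div]

lemma En_cyc {n : ℕ} (h : Perm (Fin (n+2)) → ℝ) :
    En (fun σ => h (σ * finRotate (n+2) * σ⁻¹)) =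
      En (fun σ : Perm (Fin (n+1)) =>
        ∑ p : Fin (n+1), h (decomposeFin.symm (p.succ, σ * finRotate (n+1) * σ⁻¹))) / (n+1) := by
  have h1 := rot_sum (fun (σ : Perm (Fin (n+2))) y => if y = 0 then h (σ * finRotate (n+2) * σ⁻¹) else 0)
    (by intro σ y; simp only [conj_rot])
  simp only [sum_ite_eq', mem_univ, if_true] at h1
  rw [sum_ins (fun σ => if σ 0 = 0 then h (σ * finRotate (n+2) * σ⁻¹) else 0)] at h1
  simp only [decomposeFin_symm_apply_zero] at h1
  rw [sum_comm] at h1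
  simp only [sum_ite_eq', mem_univ, if_true, ins_conj] at h1
  have h2 := rot_sum (fun (σ : Perm (Fin (n+1))) y =>
    h (decomposeFin.symm (y.succ, σ * finRotate (n+1) * σ⁻¹)))
    (by intro σ y; simp only [conj_rot])
  unfold En
  rw [h1, h2, card_perm_succ]
  have : (Fintype.card (Perm (Fin (n+1))) : ℝ) ≠ 0 := by positivity
  have h3 : (n:ℝ) + 1 ≠ 0 := by positivity
  push_cast
  have h4 : (n:ℝ) + 1 + 1 ≠ 0 := by positivity
  field_simp

theorem coupling (n : ℕ) : ∃ (Ω : Type) (_ : Fintype Ω) (_ : Nonempty Ω)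
    (T P : Ω → Perm (Fin (n+1))),
    (∀ h : Perm (Fin (n+1)) → ℝ, (∑ ω, h (P ω)) / Fintype.card Ω = En h) ∧
    (∀ h : Perm (Fin (n+1)) → ℝ, (∑ ω, h (T ω)) / Fintype.card Ω =
      En (fun σ => h (σ * finRotate (n+1) * σ⁻¹))) ∧
    (∑ ω, (2:ℝ) ^ (Dis (T ω) (P ω))) / Fintype.card Ω ≤ (n+2)*(n+3)*(n+4) := by
  induction n with
  | zero =>
    have hss : Subsingleton (Perm (Fin (0+1))) := inferInstanceAs (Subsingleton (Perm (Fin 1)))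
    refine ⟨Unit, inferInstance, inferInstance, fun _ => 1, fun _ => 1, ?_, ?_, ?_⟩
    · intro h
      have : ∀ σ, h σ = h 1 := fun σ => by rw [Subsingleton.elim σ 1]
      have e : h = fun _ => h 1 := funext this
      rw [e, En_const]; simp
    · intro h
      have e : (fun σ : Perm (Fin (0+1)) => h (σ * finRotate (0+1) * σ⁻¹)) = fun _ => h 1 := by
        funext σ; rw [Subsingleton.elim (σ * finRotate (0+1) * σ⁻¹) 1]
      rw [e, En_const]; simp
    · simp [Dis]; norm_num
  | succ n ih =>
    obtain ⟨Ω, _, _, T, P, hP, hT, hD⟩ := ih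
    have hΩ : (Fintype.card Ω : ℝ) ≠ 0 := by positivity
    have hn1 : (n:ℝ) + 1 ≠ 0 := by positivity
    have hn2 : (n:ℝ) + 1 + 1 ≠ 0 := by positivity
    have hcard : (Fintype.card (Ω × Fin (n+2) × Fin (n+1)) : ℝ) =
        Fintype.card Ω * ((n+1+1) * (n+1)) := by
      simp only [Fintype.card_prod, Fintype.card_fin]; push_cast; ring
    refine ⟨Ω × Fin (n+2) × Fin (n+1), inferInstance, inferInstance,
      fun w => decomposeFin.symm (if w.2.1 = 0 then w.2.2.succ else w.2.1, T w.1),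
      fun w => decomposeFin.symm (w.2.1, P w.1), ?_, ?_, ?_⟩
    · intro h
      rw [En_succ, ← hP, hcard]
      simp only [Fintype.sum_prod_type, sum_const, card_univ, Fintype.card_fin, nsmul_eq_mul,
        ← mul_sum]
      push_cast
      field_simp
    · intro h
      rw [En_cyc, ← hT (fun σ => ∑ p : Fin (n+1), h (decomposeFin.symm (p.succ, σ))), hcard]
      simp only [Fintype.sum_prod_type]
      have : ∀ ω, ∑ x : Fin (n+2), ∑ p : Fin (n+1),
          h (decomposeFin.symm (if x = 0 then p.succ else x, T ω)) =
          (n + 1 + 1) * ∑ p : Fin (n+1), h (decomposeFin.symm (p.succ, T ω)) := by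
        intro ω
        rw [Fin.sum_univ_succ]
        simp only [if_true, Fin.succ_ne_zero, if_false, sum_const, card_univ, Fintype.card_fin,
          nsmul_eq_mul, ← mul_sum]
        push_cast; ring
      simp only [this, ← mul_sum]
      field_simp
    · rw [hcard, div_le_iff₀ (by positivity)]
      rw [div_le_iff₀ (by positivity)] at hD
      simp only [Fintype.sum_prod_type]
      have : ∀ ω, ∑ x : Fin (n+2), ∑ p : Fin (n+1),
          (2:ℝ) ^ Dis (decomposeFin.symm (if x = 0 then p.succ else x, T ω))
            (decomposeFin.symm (x, P ω)) ≤ (n+1) * (n+5) * 2 ^ Dis (T ω) (P ω) := by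
        intro ω
        rw [Fin.sum_univ_succ]
        simp only [if_true, Fin.succ_ne_zero, if_false, sum_const, card_univ, Fintype.card_fin,
          nsmul_eq_mul]
        have a1 : ∑ p : Fin (n+1), (2:ℝ) ^ Dis (decomposeFin.symm (p.succ, T ω))
            (decomposeFin.symm (0, P ω)) ≤ ∑ p : Fin (n+1), 4 * 2 ^ Dis (T ω) (P ω) := by
          refine sum_le_sum fun p _ => ?_
          calc (2:ℝ) ^ Dis (decomposeFin.symm (p.succ, T ω)) (decomposeFin.symm (0, P ω))
              ≤ 2 ^ (Dis (T ω) (P ω) + 2) := pow_le_pow_right₀ (by norm_num) (Dis_ins2 _ _ _)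
            _ = _ := by ring
        have a2 : ∑ p : Fin (n+1), ((n+1 : ℕ):ℝ) * (2:ℝ) ^ Dis (decomposeFin.symm (p.succ, T ω))
            (decomposeFin.symm (p.succ, P ω)) ≤ ∑ p : Fin (n+1), ((n+1 : ℕ):ℝ) * 2 ^ Dis (T ω) (P ω) := by
          refine sum_le_sum fun p _ => ?_
          exact mul_le_mul_of_nonneg_left (pow_le_pow_right₀ (by norm_num) (Dis_ins _ _ _)) (by positivity)
        refine (add_le_add a1 a2).trans (le_of_eq ?_)
        simp only [sum_const, card_univ, Fintype.card_fin, nsmul_eq_mul]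
        push_cast; ring
      refine (sum_le_sum fun ω _ => this ω).trans ?_
      rw [← mul_sum]
      refine (mul_le_mul_of_nonneg_left hD (by positivity)).trans (le_of_eq ?_)
      push_cast; ring

end Coup

section Fin0
open Equiv

lemma osc_conj (q : ℝ) {n : ℕ} (σ : Perm (Fin n)) :
    oscStat q σ = rhoq q (σ * finRotate n * σ⁻¹) := by
  unfold oscStat rhoq
  rw [← Equiv.sum_comp σ (fun i => |(((σ * finRotate n * σ⁻¹) i : ℕ) : ℝ) - ((i : ℕ) : ℝ)| ^ q)]
  refine sum_congr rfl fun i _ => ?_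
  simp [Perm.mul_apply]

lemma En_one_le {n : ℕ} (p : Perm (Fin n) → Prop) : 0 ≤ Pn p ∧ Pn p ≤ 1 := by
  rw [Pn_eq]
  constructor
  · refine (En_const (n := n) 0).symm.le.trans ?_
    apply En_mono; intro σ; split_ifs <;> norm_num
  · refine le_trans ?_ (En_const (n := n) 1).le
    apply En_mono; intro σ; split_ifs <;> norm_num

/-- Transfer through the coupling. -/
lemma transfer {m : ℕ} (a : Fin (m+1) → Fin (m+1) → ℝ) (M : ℝ) (hM : ∀ i j, |a i j| ≤ M)
    (t : ℝ) (x : ℝ) :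
    Pn (fun σ => Wst a (σ * finRotate (m+1) * σ⁻¹) ≤ x) ≤
      Pn (fun σ => Wst a σ ≤ x + 2 * M * t) + (m+2)*(m+3)*(m+4) / 2 ^ t ∧
    Pn (fun σ => Wst a σ ≤ x - 2 * M * t) - (m+2)*(m+3)*(m+4) / 2 ^ t ≤
      Pn (fun σ => Wst a (σ * finRotate (m+1) * σ⁻¹) ≤ x) := by
  obtain ⟨Ω, _, _, T, P, hP, hT, hD⟩ := coupling m
  have hM0 : 0 ≤ M := (abs_nonneg _).trans (hM 0 0)
  have hΩ : (0:ℝ) < Fintype.card Ω := by positivity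
  have h2t : (0:ℝ) < 2 ^ t := by positivity
  rw [Pn_eq, Pn_eq, Pn_eq]
  rw [← hT (fun σ => if Wst a σ ≤ x then 1 else 0), ← hP, ← hP]
  have hbad : (∑ ω, (2:ℝ) ^ (Dis (T ω) (P ω)) / 2 ^ t) / Fintype.card Ω ≤
      (m+2)*(m+3)*(m+4) / 2 ^ t := by
    rw [← sum_div, div_right_comm]
    exact div_le_div_of_nonneg_right hD h2t.le
  have key : ∀ ω, 1 ≤ (2:ℝ) ^ (Dis (T ω) (P ω)) / 2 ^ t ∨ |Wst a (T ω) - Wst a (P ω)| ≤ 2 * M * t := by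
    intro ω
    rcases le_total t (Dis (T ω) (P ω) : ℝ) with h | h
    · left
      rw [one_le_div h2t, ← Real.rpow_natCast]
      exact Real.rpow_le_rpow_of_exponent_le (by norm_num) h
    · right
      exact (Wst_diff a M hM _ _).trans (mul_le_mul_of_nonneg_left h (by positivity))
  have hpos : ∀ ω, 0 ≤ (2:ℝ) ^ (Dis (T ω) (P ω)) / 2 ^ t := fun ω => by positivity
  constructor
  · refine le_trans ?_ (add_le_add le_rfl hbad)
    rw [← add_div, ← sum_add_distrib]
    refine div_le_div_of_nonneg_right (sum_le_sum fun ω _ => ?_) hΩ.le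
    have := hpos ω
    rcases key ω with h | h
    · split_ifs <;> linarith
    · have h' := abs_le.mp h
      split_ifs
      all_goals linarith [h'.1, h'.2]
  · rw [sub_le_iff_le_add]
    refine le_trans ?_ (add_le_add le_rfl hbad)
    rw [← add_div, ← sum_add_distrib]
    refine div_le_div_of_nonneg_right (sum_le_sum fun ω _ => ?_) hΩ.le
    have := hpos ω
    rcases key ω with h | h
    · split_ifs <;> linarith
    · have h' := abs_le.mp h
      split_ifs
      all_goals linarith [h'.1, h'.2]

lemma transfer' {n : ℕ} (hn : 1 ≤ n) (a : Fin n → Fin n → ℝ) (M : ℝ) (hM : ∀ i j, |a i j| ≤ M)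
    (t : ℝ) (x : ℝ) :
    Pn (fun σ => Wst a (σ * finRotate n * σ⁻¹) ≤ x) ≤
      Pn (fun σ => Wst a σ ≤ x + 2 * M * t) + (n+1)*(n+2)*(n+3) / 2 ^ t ∧
    Pn (fun σ => Wst a σ ≤ x - 2 * M * t) - (n+1)*(n+2)*(n+3) / 2 ^ t ≤
      Pn (fun σ => Wst a (σ * finRotate n * σ⁻¹) ≤ x) := by
  obtain ⟨m, rfl⟩ : ∃ m, n = m + 1 := ⟨n - 1, by omega⟩
  have h := transfer a M hM t x
  have e : (((m+1:ℕ):ℝ)+1)*(((m+1:ℕ):ℝ)+2)*(((m+1:ℕ):ℝ)+3) = ((m:ℝ)+2)*(m+3)*(m+4) := by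
    push_cast; ring
  rw [e]
  exact h

end Fin0

/-- Berry–Esseen bound for the oscillation statistic, normalized with the mean and
standard deviation of Spearman's `ρ_q`: the Kolmogorov distance to the standard
normal is `O(log n / √n)`. -/
theorem oscStat_berry_esseen (q : ℝ) (hq : 1 ≤ q) :
    ∃ C : ℝ, ∀ n : ℕ, 2 ≤ n → ∀ x : ℝ,
      |Pn (fun σ : Equiv.Perm (Fin n) =>
          (oscStat q σ - En (rhoq q (n := n))) /
            Real.sqrt (VarN (rhoq q (n := n))) ≤ x) -
        stdNormalCDF x| ≤ C * Real.log n / Real.sqrt n := by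
  set K : ℝ := 64 * 4 ^ q with hK
  have hK0 : 0 < K := by positivity
  refine ⟨136 * K + 8, fun n hn x => ?_⟩
  have hn2 : (2:ℝ) ≤ n := by exact_mod_cast hn
  by_cases h4 : n < 4
  · have h1 := En_one_le (fun σ : Equiv.Perm (Fin n) =>
          (oscStat q σ - En (rhoq q (n := n))) /
            Real.sqrt (VarN (rhoq q (n := n))) ≤ x)
    have h2 := cdf_nonneg x
    have h3 := cdf_le_one x
    have hl : 1/2 ≤ Real.log n := by
      have := Real.log_le_log (by norm_num) hn2
      linarith [Real.log_two_gt_d9]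
    have hs : Real.sqrt n ≤ 2 := by
      rw [Real.sqrt_le_left (by norm_num)]
      have : (n:ℝ) < 4 := by exact_mod_cast h4
      linarith
    have : 1 ≤ (136 * K + 8) * Real.log n / Real.sqrt n := by
      rw [one_le_div (by positivity)]
      nlinarith
    rw [abs_le]
    constructor <;> linarith [h1.1, h1.2]
  push Not at h4
  obtain ⟨a, ha, hM, hv, hW⟩ := normalized hq h4
  rw [← hK] at hM
  have hosc : (fun σ : Equiv.Perm (Fin n) => (oscStat q σ - En (rhoq q (n := n))) /
            Real.sqrt (VarN (rhoq q (n := n))) ≤ x) =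
      fun σ => Wst a (σ * finRotate n * σ⁻¹) ≤ x := by
    funext σ
    rw [hW, osc_conj]
  rw [hosc]
  have hn4 : (4:ℝ) ≤ n := by exact_mod_cast h4
  have hs0 : 0 < Real.sqrt n := by positivity
  set M := K / Real.sqrt n with hMdef
  have hM0 : 0 < M := by positivity
  have hlog : 1 ≤ Real.log n := by
    rw [Real.le_log_iff_exp_le (by positivity)]
    linarith [Real.exp_one_lt_d9]
  set t := 8 * Real.log n with ht
  have htr := transfer' (by omega) a M hM t x
  have htail : ((n:ℝ)+1)*(n+2)*(n+3) / 2 ^ t ≤ 8 * Real.log n / Real.sqrt n := by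
    have e1 : (n:ℝ)^4 ≤ 2 ^ t := by
      rw [Real.rpow_def_of_pos (by norm_num), ← Real.rpow_natCast,
        Real.rpow_def_of_pos (by positivity)]
      apply Real.exp_le_exp.mpr
      push_cast
      nlinarith [Real.log_two_gt_d9]
    have e2 : ((n:ℝ)+1)*(n+2)*(n+3) ≤ 8 * (n:ℝ)^3 := by
      calc ((n:ℝ)+1)*(n+2)*(n+3) ≤ (2*n)*(2*n)*(2*n) := by gcongr <;> linarith
        _ = _ := by ring
    have e3 : Real.sqrt n ≤ n := by
      rw [Real.sqrt_le_left (by positivity)]; nlinarith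
    calc ((n:ℝ)+1)*(n+2)*(n+3) / 2 ^ t ≤ 8 * (n:ℝ)^3 / (n:ℝ)^4 :=
          div_le_div₀ (by positivity) e2 (by positivity) e1
      _ = 8 / n := by field_simp
      _ ≤ 8 / Real.sqrt n := div_le_div_of_nonneg_left (by norm_num) hs0 e3
      _ ≤ 8 * Real.log n / Real.sqrt n := div_le_div_of_nonneg_right (by linarith) hs0.le
  have hMt : 0 ≤ 2 * M * t := by positivity
  have b1 := abs_le.mp (comb_BE hn a ha M hM hv (x + 2 * M * t))
  have b2 := abs_le.mp (comb_BE hn a ha M hM hv (x - 2 * M * t))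
  have c1 := cdf_lip (x := x) (y := x + 2 * M * t) (by linarith)
  have c2 := cdf_lip (x := x - 2 * M * t) (y := x) (by linarith)
  have fin1 : 120 * M + 2 * M * t + 8 * Real.log n / Real.sqrt n ≤
      (136 * K + 8) * Real.log n / Real.sqrt n := by
    have e : (136 * K + 8) * Real.log n / Real.sqrt n =
        120 * (M * Real.log n) + 16 * M * Real.log n + 8 * Real.log n / Real.sqrt n := by
      rw [hMdef]; field_simp; ring
    rw [e, ht]
    nlinarith
  rw [abs_le]
  constructor <;> linarith [htr.1, htr.2, b1.1, b1.2, b2.1, b2.2]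
end
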